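/- Let G be a plane graph with outer cycle C, let P = p1p2 be a path of length one contained in C, and let L be a list assignment for G such that |L(v)| ≥ 5 for every v ∈ V(G) − V(C), |L(v)| ≥ 3 for every v ∈ V(C) − V(P), |L(p1)| ≥ 1, |L(p2)| ≥ 1, and L(p1) ≠ L(p2). Then G has an L-coloring. -/

import Mathlib

/-!
Common definitions: plane graphs (given by a concrete embedding in the plane),
outer face, canvases, list colorings, governments, harmonicas and coloring
harmonicas, following Postle–Thomas,
"Five-list-coloring graphs on surfaces III".
-/

open Set

universe u

/-- A finite simple graph together with an embedding in the plane:
each vertex gets a point, each edge a simple arc joining its endpoints;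
arcs avoid other vertices, and two distinct edges meet only in common
endpoints. -/
structure PlaneGraph (V : Type u) where
  verts : Set V
  Adj : V → V → Prop
  finite_verts : verts.Finite
  adj_symm : ∀ u v, Adj u v → Adj v u
  adj_irrefl : ∀ v, ¬Adj v v
  adj_mem : ∀ u v, Adj u v → u ∈ verts
  pos : V → ℝ × ℝ
  arc : Sym2 V → Set (ℝ × ℝ)
  pos_injOn : Set.InjOn pos verts
  arc_arc : ∀ u v, Adj u v → ∃ f : ℝ → ℝ × ℝ,
    ContinuousOn f (Set.Icc 0 1) ∧ Set.InjOn f (Set.Icc 0 1) ∧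
    f '' Set.Icc 0 1 = arc s(u, v) ∧ f 0 = pos u ∧ f 1 = pos v
  arc_avoid : ∀ u v, Adj u v → ∀ w ∈ verts, pos w ∈ arc s(u, v) → w = u ∨ w = v
  arc_meet : ∀ u v x y, Adj u v → Adj x y → s(u, v) ≠ s(x, y) →
    arc s(u, v) ∩ arc s(x, y) ⊆ pos '' (({u, v} : Set V) ∩ ({x, y} : Set V))

namespace PlaneGraph

variable {V : Type u}

/-- The point set of the drawing of the plane graph. -/
def image (G : PlaneGraph V) : Set (ℝ × ℝ) :=
  G.pos '' G.verts ∪ ⋃ (u : V) (v : V) (_ : G.Adj u v), G.arc s(u, v)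

/-- The outer (unbounded) face of the drawing. -/
def outerFace (G : PlaneGraph V) : Set (ℝ × ℝ) :=
  {p | p ∉ G.image ∧ ¬Bornology.IsBounded (connectedComponentIn G.imageᶜ p)}

/-- A vertex incident with (i.e. on the boundary of) the outer face. -/
def OnOuter (G : PlaneGraph V) (v : V) : Prop := G.pos v ∈ frontier G.outerFace

/-- An edge incident with (i.e. on the boundary of) the outer face. -/
def EdgeOnOuter (G : PlaneGraph V) (u v : V) : Prop :=
  G.arc s(u, v) ⊆ frontier G.outerFace

/-- The vertices of the boundary of the outer face. -/
def boundaryVerts (G : PlaneGraph V) : Set V := {v | v ∈ G.verts ∧ G.OnOuter v}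

/-- Connectivity of a plane graph. -/
def Connected (G : PlaneGraph V) : Prop :=
  G.verts.Nonempty ∧ ∀ u ∈ G.verts, ∀ v ∈ G.verts, Relation.ReflTransGen G.Adj u v

/-- `H` is a (plane) subgraph of `G`, drawn the same way. -/
def IsSubgraph (H G : PlaneGraph V) : Prop :=
  H.verts ⊆ G.verts ∧ (∀ u v, H.Adj u v → G.Adj u v) ∧
  (∀ v ∈ H.verts, H.pos v = G.pos v) ∧
  (∀ u v, H.Adj u v → H.arc s(u, v) = G.arc s(u, v))

/-- Delete a set of vertices (and all incident edges) from a plane graph. -/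
def deleteVerts (G : PlaneGraph V) (s : Set V) : PlaneGraph V where
  verts := G.verts \ s
  Adj u v := G.Adj u v ∧ u ∉ s ∧ v ∉ s
  finite_verts := G.finite_verts.subset Set.diff_subset
  adj_symm := fun u v h => ⟨G.adj_symm u v h.1, h.2.2, h.2.1⟩
  adj_irrefl := fun v h => G.adj_irrefl v h.1
  adj_mem := fun u v h => ⟨G.adj_mem u v h.1, h.2.1⟩
  pos := G.pos
  arc := G.arc
  pos_injOn := G.pos_injOn.mono Set.diff_subset
  arc_arc := fun u v h => G.arc_arc u v h.1
  arc_avoid := fun u v h w hw hm => G.arc_avoid u v h.1 w hw.1 hm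
  arc_meet := fun u v x y h h' hne => G.arc_meet u v x y h.1 h'.1 hne

/-- `G` has a proper coloring from the lists `L`. -/
def HasLColoring (G : PlaneGraph V) (L : V → Finset ℕ) : Prop :=
  ∃ φ : V → ℕ, (∀ v ∈ G.verts, φ v ∈ L v) ∧ ∀ u v, G.Adj u v → φ u ≠ φ v

/-- A vertex of degree exactly one. -/
def DegreeOne (G : PlaneGraph V) (x : V) : Prop :=
  (∃ a, G.Adj x a) ∧ ∀ a b, G.Adj x a → G.Adj x b → a = b

end PlaneGraph

/-- The cyclic successor of an index in a list. -/
def cycNext {V : Type u} (C : List V) (i : Fin C.length) : Fin C.length :=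
  ⟨((i : ℕ) + 1) % C.length, Nat.mod_lt _ (lt_of_le_of_lt (Nat.zero_le _) i.isLt)⟩

/-- The list `C` is a cycle of `G` whose image is exactly the boundary of the
outer face of `G`; i.e. `G` is a plane graph with outer cycle `C`. -/
def PlaneGraph.IsOuterCycle {V : Type u} (G : PlaneGraph V) (C : List V) : Prop :=
  C.Nodup ∧ 3 ≤ C.length ∧ (∀ v ∈ C, v ∈ G.verts) ∧
  (∀ i : Fin C.length, G.Adj (C.get i) (C.get (cycNext C i))) ∧
  frontier G.outerFace =
    G.pos '' {v | v ∈ C} ∪ ⋃ i : Fin C.length, G.arc s(C.get i, C.get (cycNext C i))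

/-- `pq` is an edge of the cycle (given as a list) `C`. -/
def IsCycleEdge {V : Type u} (C : List V) (p q : V) : Prop :=
  ∃ i : Fin C.length, s(p, q) = s(C.get i, C.get (cycNext C i))

/-- `(G, S, L)` is a canvas, where the subgraph `S` of the boundary of the
outer face of `G` is given by its vertex set `Sverts` and adjacency `SAdj`. -/
structure IsCanvas {V : Type u} (G : PlaneGraph V) (Sverts : Set V) (SAdj : V → V → Prop)
    (L : V → Finset ℕ) : Prop where
  sadj_symm : ∀ u v, SAdj u v → SAdj v u
  sadj_sub : ∀ u v, SAdj u v → G.Adj u v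
  sadj_mem : ∀ u v, SAdj u v → u ∈ Sverts
  sverts_sub : Sverts ⊆ G.verts
  sverts_outer : ∀ v ∈ Sverts, G.OnOuter v
  sedges_outer : ∀ u v, SAdj u v → G.EdgeOnOuter u v
  lists_nonempty : ∀ v ∈ G.verts, (L v).Nonempty
  card_inner : ∀ v ∈ G.verts, ¬G.OnOuter v → 5 ≤ (L v).card
  card_outside_S : ∀ v ∈ G.verts, v ∉ Sverts → 3 ≤ (L v).card
  scolorable : ∃ φ : V → ℕ, (∀ v ∈ Sverts, φ v ∈ L v) ∧ ∀ u v, SAdj u v → φ u ≠ φ v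

/-- The adjacency relation of the single-edge path `p₁p₂`. -/
def pathAdj {V : Type u} (p1 p2 : V) : V → V → Prop :=
  fun u v => (u = p1 ∧ v = p2) ∨ (u = p2 ∧ v = p1)

/-- `(G, P, L)` is a canvas whose precolored subgraph is a path `P = p₁p₂` of
length one (in the boundary of the outer face of `G`). -/
def IsPathCanvas {V : Type u} (G : PlaneGraph V) (p1 p2 : V) (L : V → Finset ℕ) : Prop :=
  p1 ≠ p2 ∧ IsCanvas G {p1, p2} (pathAdj p1 p2) L

/-- `c = (c₁, c₂)` is a proper `L`-coloring of the edge `p₁p₂`. -/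
def ProperEdgeColoring {V : Type u} (L : V → Finset ℕ) (p1 p2 : V) (c : ℕ × ℕ) : Prop :=
  c.1 ∈ L p1 ∧ c.2 ∈ L p2 ∧ c.1 ≠ c.2

/-- `Φ_T(P', 𝒞)`: the colorings of the edge `q₁q₂` extendable to an `L`-coloring
of `G` whose restriction to `p₁p₂` lies in `C`. -/
def Phi {V : Type u} (G : PlaneGraph V) (L : V → Finset ℕ) (p1 p2 q1 q2 : V)
    (C : Set (ℕ × ℕ)) : Set (ℕ × ℕ) :=
  {c | ∃ φ : V → ℕ, (∀ v ∈ G.verts, φ v ∈ L v) ∧ (∀ u v, G.Adj u v → φ u ≠ φ v) ∧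
    (φ p1, φ p2) ∈ C ∧ φ q1 = c.1 ∧ φ q2 = c.2}

/-- The set of colors used on the first vertex of the path. -/
def fstColors (C : Set (ℕ × ℕ)) : Set ℕ := Prod.fst '' C

/-- The set of colors used on the second vertex of the path. -/
def sndColors (C : Set (ℕ × ℕ)) : Set ℕ := Prod.snd '' C

/-- A dictatorship: at least two (distinct) colorings, all agreeing on one of
the two vertices (the dictator). -/
def IsDictatorship (C : Set (ℕ × ℕ)) : Prop :=
  (∃ c ∈ C, ∃ d ∈ C, c ≠ d) ∧
  ((∃ a, ∀ c ∈ C, c.1 = a) ∨ (∃ a, ∀ c ∈ C, c.2 = a))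

/-- A democracy: exactly the two colorings `(x, y)` and `(y, x)`. -/
def IsDemocracy (C : Set (ℕ × ℕ)) : Prop :=
  ∃ x y : ℕ, x ≠ y ∧ C = {(x, y), (y, x)}

/-- A government is a dictatorship or a democracy. -/
def IsGovernment (C : Set (ℕ × ℕ)) : Prop := IsDictatorship C ∨ IsDemocracy C

/-- A confederacy: not a government, but the union of two governments. -/
def IsConfederacy (C : Set (ℕ × ℕ)) : Prop :=
  ¬IsGovernment C ∧ ∃ C1 C2 : Set (ℕ × ℕ), IsGovernment C1 ∧ IsGovernment C2 ∧ C = C1 ∪ C2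

/-- The canvas `(G, p₁p₂, L)` is a harmonica from the path `p₁p₂` to the path
`q₁q₂` with government `C`. -/
inductive IsHarmonica {V : Type u} (L : V → Finset ℕ) :
    PlaneGraph V → V → V → V → V → Set (ℕ × ℕ) → Prop where
  /-- Rule (i): `G = P = P'`. -/
  | same (G : PlaneGraph V) (p1 p2 q1 q2 : V) (C : Set (ℕ × ℕ))
      (hcanvas : IsPathCanvas G p1 p2 L)
      (hproper : ∀ c ∈ C, ProperEdgeColoring L p1 p2 c)
      (hgov : IsGovernment C)
      (hq : (q1 = p1 ∧ q2 = p2) ∨ (q1 = p2 ∧ q2 = p1))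
      (hverts : G.verts = {p1, p2})
      (hedges : ∀ u v, G.Adj u v → pathAdj p1 p2 u v) :
      IsHarmonica L G p1 p2 q1 q2 C
  /-- Rule (ii): `C` is a dictatorship, `G = P ∪ P'`, `V(P) ∩ V(P') = {z}`
  where `z` is the dictator. -/
  | cherry (G : PlaneGraph V) (p1 p2 q1 q2 z : V) (C : Set (ℕ × ℕ))
      (hcanvas : IsPathCanvas G p1 p2 L)
      (hproper : ∀ c ∈ C, ProperEdgeColoring L p1 p2 c)
      (hdict : IsDictatorship C)
      (hq : q1 ≠ q2) (hqadj : G.Adj q1 q2) (hqout : G.EdgeOnOuter q1 q2)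
      (hverts : G.verts = {p1, p2, q1, q2})
      (hedges : ∀ u v, G.Adj u v → pathAdj p1 p2 u v ∨ pathAdj q1 q2 u v)
      (hz : (({p1, p2} : Set V) ∩ ({q1, q2} : Set V)) = {z})
      (hzdict : (z = p1 ∧ ∃ a, ∀ c ∈ C, c.1 = a) ∨ (z = p2 ∧ ∃ a, ∀ c ∈ C, c.2 = a)) :
      IsHarmonica L G p1 p2 q1 q2 C
  /-- Rule (iii): `C` is a dictatorship with dictator `z ∈ V(P)` in color `c`,
  sitting on a triangle `z u₁ u₂`. -/
  | dict (G : PlaneGraph V) (p1 p2 q1 q2 z w u1 u2 : V) (c : ℕ) (L0 : Finset ℕ)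
      (C C' : Set (ℕ × ℕ))
      (hcanvas : IsPathCanvas G p1 p2 L)
      (hproper : ∀ d ∈ C, ProperEdgeColoring L p1 p2 d)
      (hdict : IsDictatorship C)
      (hq : q1 ≠ q2) (hqadj : G.Adj q1 q2) (hqout : G.EdgeOnOuter q1 q2)
      (hz : (z = p1 ∧ w = p2 ∧ (∀ d ∈ C, d.1 = c) ∧
              (u1 = w → sndColors C = (L0 : Set ℕ)) ∧
              (u2 = w → sndColors C = (L0 : Set ℕ))) ∨
            (z = p2 ∧ w = p1 ∧ (∀ d ∈ C, d.2 = c) ∧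
              (u1 = w → fstColors C = (L0 : Set ℕ)) ∧
              (u2 = w → fstColors C = (L0 : Set ℕ))))
      (hzu1 : G.Adj z u1) (hzu2 : G.Adj z u2) (hu12 : G.Adj u1 u2)
      (hL0 : L0.card = 2)
      (hLu1 : u1 ∉ ({p1, p2} : Set V) → L u1 = L0 ∪ {c})
      (hLu2 : u2 ∉ ({p1, p2} : Set V) → L u2 = L0 ∪ {c})
      (hu1P : u1 ∈ ({p1, p2} : Set V) → u1 = w)
      (hu2P : u2 ∈ ({p1, p2} : Set V) → u2 = w)
      (hdem : IsDemocracy C')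
      (hC'1 : fstColors C' = (L0 : Set ℕ)) (hC'2 : sndColors C' = (L0 : Set ℕ))
      (hrec : IsHarmonica L (G.deleteVerts (({p1, p2} : Set V) \ {u1, u2})) u1 u2 q1 q2 C') :
      IsHarmonica L G p1 p2 q1 q2 C
  /-- Rule (iv), with `i = 1`: `C` is a democracy, `z` is a common neighbor of
  `p₁, p₂`, and `p₁` is deleted. -/
  | demo1 (G : PlaneGraph V) (p1 p2 q1 q2 z : V) (a b c : ℕ) (L0 : Finset ℕ)
      (C C' : Set (ℕ × ℕ))
      (hcanvas : IsPathCanvas G p1 p2 L)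
      (hproper : ∀ d ∈ C, ProperEdgeColoring L p1 p2 d)
      (hdemC : IsDemocracy C)
      (hq : q1 ≠ q2) (hqadj : G.Adj q1 q2) (hqout : G.EdgeOnOuter q1 q2)
      (hz1 : G.Adj z p1) (hz2 : G.Adj z p2)
      (hLz : L z = L0 ∪ {c})
      (hC1 : fstColors C = (L0 : Set ℕ)) (hC2 : sndColors C = (L0 : Set ℕ))
      (hab : a ≠ b) (hL0ab : (L0 : Set ℕ) = {a, b})
      (hC' : C' = {(c, a), (c, b)})
      (hrec : IsHarmonica L (G.deleteVerts {p1}) z p2 q1 q2 C') :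
      IsHarmonica L G p1 p2 q1 q2 C
  /-- Rule (iv), with `i = 2`: `C` is a democracy, `z` is a common neighbor of
  `p₁, p₂`, and `p₂` is deleted. -/
  | demo2 (G : PlaneGraph V) (p1 p2 q1 q2 z : V) (a b c : ℕ) (L0 : Finset ℕ)
      (C C' : Set (ℕ × ℕ))
      (hcanvas : IsPathCanvas G p1 p2 L)
      (hproper : ∀ d ∈ C, ProperEdgeColoring L p1 p2 d)
      (hdemC : IsDemocracy C)
      (hq : q1 ≠ q2) (hqadj : G.Adj q1 q2) (hqout : G.EdgeOnOuter q1 q2)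
      (hz1 : G.Adj z p1) (hz2 : G.Adj z p2)
      (hLz : L z = L0 ∪ {c})
      (hC1 : fstColors C = (L0 : Set ℕ)) (hC2 : sndColors C = (L0 : Set ℕ))
      (hab : a ≠ b) (hL0ab : (L0 : Set ℕ) = {a, b})
      (hC' : C' = {(c, a), (c, b)})
      (hrec : IsHarmonica L (G.deleteVerts {p2}) z p1 q1 q2 C') :
      IsHarmonica L G p1 p2 q1 q2 C

/-- `(G, L)` is a coloring harmonica from `uv` to `w` (source `Sum.inr (u, v)`)
or from `u` to `w` (source `Sum.inl u`). -/
inductive IsColoringHarmonica {V : Type u} [DecidableEq V] :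
    PlaneGraph V → (V → Finset ℕ) → V ⊕ V × V → V → Prop where
  /-- `G` is a triangle with vertex set `{u, v, w}`, `L(u) = L(v) = L(w)` and
  `|L(u)| = 2`. -/
  | tri (G : PlaneGraph V) (L : V → Finset ℕ) (u v w : V)
      (hconn : G.Connected) (huv : u ≠ v) (huw : u ≠ w) (hvw : v ≠ w)
      (hu : G.OnOuter u) (hv : G.OnOuter v) (hw : G.OnOuter w)
      (huvout : G.EdgeOnOuter u v)
      (hverts : G.verts = {u, v, w})
      (hadjuv : G.Adj u v) (hadjvw : G.Adj v w) (hadjuw : G.Adj u w)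
      (hLuv : L u = L v) (hLvw : L v = L w) (hcard : (L u).card = 2) :
      IsColoringHarmonica G L (Sum.inr (u, v)) w
  /-- There is a triangle `uvz` on the outer face; delete one or both of
  `u, v` and recurse from `z`. -/
  | step (G : PlaneGraph V) (L : V → Finset ℕ) (u v w z : V) (s : Set V)
      (hconn : G.Connected) (huv : u ≠ v) (huw : u ≠ w) (hvw : v ≠ w)
      (hu : G.OnOuter u) (hv : G.OnOuter v) (hw : G.OnOuter w)
      (huvout : G.EdgeOnOuter u v)
      (hadjuv : G.Adj u v) (hadjuz : G.Adj u z) (hadjvz : G.Adj v z)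
      (hz : G.OnOuter z)
      (hLuv : L u = L v) (hsub : L u ⊆ L z)
      (hcardu : (L u).card = 2) (hcardz : (L z).card = 3)
      (hs : s = {u} ∨ s = {v} ∨ s = ({u, v} : Set V))
      (hrec : IsColoringHarmonica (G.deleteVerts s)
        (Function.update L z (L z \ L u)) (Sum.inl z) w) :
      IsColoringHarmonica G L (Sum.inr (u, v)) w
  /-- `|L(u)| = 1`, `u` sits on a triangle `uxy`; delete `u` and recurse
  from `xy`. -/
  | vert (G : PlaneGraph V) (L : V → Finset ℕ) (u w x y : V)
      (hconn : G.Connected) (huw : u ≠ w)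
      (hu : G.OnOuter u) (hw : G.OnOuter w)
      (hx : G.OnOuter x) (hy : G.OnOuter y)
      (hadjux : G.Adj u x) (hadjuy : G.Adj u y) (hadjxy : G.Adj x y)
      (hcardu : (L u).card = 1)
      (hLxy : L x \ L u = L y \ L u) (hcardx : (L x \ L u).card = 2)
      (hrec : IsColoringHarmonica (G.deleteVerts {u})
        (Function.update (Function.update L x (L x \ L u)) y (L y \ L u))
        (Sum.inr (x, y)) w) :
      IsColoringHarmonica G L (Sum.inl u) w

/-- `(G, L)` contains a coloring harmonica `(H, L')` with the given source and
target: `H` is a subgraph of `G` and `L'` agrees with `L` on `V(H)`. -/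
def ContainsColoringHarmonica {V : Type u} [DecidableEq V] (G : PlaneGraph V)
    (L : V → Finset ℕ) (st : V ⊕ V × V) (w : V) : Prop :=
  ∃ (H : PlaneGraph V) (L' : V → Finset ℕ), H.IsSubgraph G ∧
    (∀ x ∈ H.verts, L' x = L x) ∧ IsColoringHarmonica H L' st w

/-- `v` is a cutvertex of the boundary of the outer face of `G`. -/
def BoundaryCutvertex {V : Type u} (G : PlaneGraph V) (v : V) : Prop :=
  ∃ a b : V, a ∈ G.boundaryVerts ∧ b ∈ G.boundaryVerts ∧ a ≠ v ∧ b ≠ v ∧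
    Relation.ReflTransGen (fun x y => G.Adj x y ∧ G.EdgeOnOuter x y) a b ∧
    ¬Relation.ReflTransGen
      (fun x y => G.Adj x y ∧ G.EdgeOnOuter x y ∧ x ≠ v ∧ y ≠ v) a b

open Classical in
/-- The list assignment of the democratic reduction `T(P, L0, x)`:
remove the colors of `L0` from the list of `x` and from the lists of all
neighbors of `P` other than `y`. -/
noncomputable def reducedL {V : Type u} (G : PlaneGraph V) (L : V → Finset ℕ)
    (L0 : Finset ℕ) (Q : List V) (x y : V) : V → Finset ℕ := fun w =>
  if w = x ∨ (w ≠ y ∧ ∃ p ∈ Q, G.Adj w p) then L w \ L0 else L w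

/-- The vertex set of the precolored subgraph of the democratic reduction:
`S ∖ V(P)`, together with `x` as an isolated vertex if its new list is
smaller than 3. -/
def reducedSverts {V : Type u} (Sverts : Set V) (Q : List V) (x : V)
    (L' : V → Finset ℕ) : Set V :=
  {v | (v ∈ Sverts ∧ v ∉ Q) ∨ (v = x ∧ (L' x).card < 3)}

/-- The adjacency of the precolored subgraph of the democratic reduction:
`S ∖ V(P)`. -/
def reducedSAdj {V : Type u} (SAdj : V → V → Prop) (Q : List V) : V → V → Prop :=
  fun u v => SAdj u v ∧ u ∉ Q ∧ v ∉ Q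

/-!
Add a vertex in the outer face and join it to all outer vertices. The new graph can be drawn in the
plane without crossings of independent edges, and from then on the argument is combinatorial.
Thomassen's induction is run with a connected vertex set `A`, initially the new vertex, in the role
of the outer face: the outer vertices are those with a neighbour in `A`. Deleting an outer vertex
`v` means moving it to `A`, after taking the colours reserved for `v` from the lists of its inner
neighbours, which thereby become outer vertices.

Planarity enters only through the minors `K₅` and `K₃,₃`. If deleting the ends of any edge between
outer vertices leaves a connected graph, then no outer vertex has three outer neighbours, since
these would yield one of the two minors; if some such edge separates the graph, the two sides are
coloured one after the other. The two minors are excluded by counting how often edges wind around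
vertices, modulo two.
-/

theorem exists_continuous_exp_eq {X : Type*} [TopologicalSpace X] [SimplyConnectedSpace X]
    [LocallyPathConnectedSpace X] {f : X → ℂ} (hf : Continuous f) (h0 : ∀ x, f x ≠ 0) :
    ∃ g : X → ℂ, Continuous g ∧ ∀ x, Complex.exp (g x) = f x := by
  obtain ⟨a⟩ := (inferInstance : Nonempty X)
  obtain ⟨g, ⟨-, hg⟩, -⟩ := Complex.isCoveringMapOn_exp.existsUnique_continuousMap_lifts
    ⟨f, hf⟩ (Complex.exp_log (h0 a)) h0
  exact ⟨g, g.continuous, congrFun hg⟩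

theorem sub_eq_sub_of_exp_eq_const_mul {X : Type*} [TopologicalSpace X] [PreconnectedSpace X]
    {g h : X → ℂ} (hg : Continuous g) (hh : Continuous h) {c : ℂ}
    (hgh : ∀ x, Complex.exp (g x) = c * Complex.exp (h x)) (x y : X) :
    g x - g y = h x - h y := by
  have exp_sub : ∀ t, Complex.exp (g t - h t) = c := fun t ↦ by
    rw [Complex.exp_sub, hgh t, mul_div_cancel_right₀ _ (Complex.exp_ne_zero _)]
  choose n hn using fun t ↦
    Complex.exp_eq_exp_iff_exists_int.1 ((exp_sub t).trans (exp_sub y).symm)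
  have n_eq : ∀ t, (n t : ℝ) = ((g t - h t) - (g y - h y)).im / (2 * Real.pi) := fun t ↦ by
    rw [hn t]
    simp [Real.pi_ne_zero]
  have n_continuous : Continuous n := by
    rw [Int.isClosedEmbedding_coe_real.isEmbedding.continuous_iff]
    exact (show Continuous fun t ↦ (n t : ℝ) by simp only [n_eq]; fun_prop)
  have n_const : n x = n y :=
    ((IsLocallyConstant.iff_continuous n).2 n_continuous).apply_eq_of_preconnectedSpace x y
  have hx := hn x
  rw [n_const] at hx
  linear_combination hx - hn y

open Classical in
/-- The increment from `0` to `1` of a continuous logarithm of `f : ℝ → ℂ`; its imaginary part is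
the angle swept out by `f` around the origin. It is `0` when `f` has no continuous logarithm. -/
noncomputable def logIncrement (f : ℝ → ℂ) : ℂ :=
  if h : ∃ g : ℝ → ℂ, Continuous g ∧ ∀ t, Complex.exp (g t) = f t then
    h.choose 1 - h.choose 0 else 0

theorem logIncrement_eq_sub {f g : ℝ → ℂ} {c : ℂ} (hg : Continuous g)
    (hgf : ∀ t, Complex.exp (g t) = c * f t) : logIncrement f = g 1 - g 0 := by
  have c_ne : c ≠ 0 := left_ne_zero_of_mul (hgf 0 ▸ Complex.exp_ne_zero _)
  have exists_log : ∃ h : ℝ → ℂ, Continuous h ∧ ∀ t, Complex.exp (h t) = f t :=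
    ⟨fun t ↦ g t - Complex.log c, by fun_prop, fun t ↦ by
      rw [Complex.exp_sub, hgf, Complex.exp_log c_ne, mul_div_cancel_left₀ _ c_ne]⟩
  rw [logIncrement, dif_pos exists_log]
  refine (sub_eq_sub_of_exp_eq_const_mul hg exists_log.choose_spec.1 (c := c) (fun t ↦ ?_) 1 0).symm
  rw [hgf, exists_log.choose_spec.2]

theorem exp_logIncrement {f : ℝ → ℂ} (hf : Continuous f) (h0 : ∀ t, f t ≠ 0) :
    Complex.exp (logIncrement f) = f 1 / f 0 := by
  obtain ⟨g, hg, hgf⟩ := exists_continuous_exp_eq hf h0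
  rw [logIncrement_eq_sub hg (c := 1) (by simpa using hgf), Complex.exp_sub, hgf, hgf]

/- Both sides are the total increment of `log (β t - α s)` along two sides of the unit square. -/
theorem logIncrement_add_eq_add_of_ne {α β : ℝ → ℂ} (hα : Continuous α) (hβ : Continuous β)
    (hne : ∀ s t, α s ≠ β t) :
    logIncrement (fun t ↦ β t - α 0) + logIncrement (fun s ↦ α s - β 1) =
      logIncrement (fun s ↦ α s - β 0) + logIncrement (fun t ↦ β t - α 1) := by
  obtain ⟨g, hg, hgf⟩ := exists_continuous_exp_eq (f := fun q : ℝ × ℝ ↦ β q.2 - α q.1)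
    (by fun_prop) fun q ↦ sub_ne_zero.2 (hne _ _).symm
  have right : ∀ s, logIncrement (fun t ↦ β t - α s) = g (s, 1) - g (s, 0) := fun s ↦
    logIncrement_eq_sub (g := fun t ↦ g (s, t)) (c := 1) (by fun_prop) fun t ↦ by simp [hgf]
  have left : ∀ t, logIncrement (fun s ↦ α s - β t) = g (1, t) - g (0, t) := fun t ↦
    logIncrement_eq_sub (g := fun s ↦ g (s, t)) (c := -1) (by fun_prop) fun s ↦ by simp [hgf]
  rw [right, right, left, left]
  ring

theorem exists_log_sub_log_neg {z : ℂ} (hz : z ≠ 0) :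
    ∃ m : ℤ, Complex.log z - Complex.log (-z) = (2 * m + 1) * (Real.pi * Complex.I) := by
  have : Complex.exp (Complex.log z) =
      Complex.exp (Complex.log (-z) + Real.pi * Complex.I) := by
    rw [Complex.exp_add, Complex.exp_log hz, Complex.exp_log (neg_ne_zero.2 hz),
      Complex.exp_pi_mul_I]
    ring
  obtain ⟨m, hm⟩ := Complex.exp_eq_exp_iff_exists_int.1 this
  exact ⟨m, by rw [hm]; ring⟩

theorem exists_logIncrement_sub_eq {f : ℝ → ℂ} (hf : Continuous f) {z : ℂ} (h0 : ∀ t, f t ≠ z) :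
    ∃ n : ℤ, logIncrement (fun t ↦ f t - z) =
      Complex.log (f 1 - z) - Complex.log (f 0 - z) + n * (2 * Real.pi * Complex.I) := by
  refine Complex.exp_eq_exp_iff_exists_int.1 ?_
  have h0' : ∀ t, f t - z ≠ 0 := fun t ↦ sub_ne_zero.2 (h0 t)
  rw [exp_logIncrement (by fun_prop) h0', Complex.exp_sub, Complex.exp_log (h0' 1),
    Complex.exp_log (h0' 0)]

/-- A drawing of the graph `H` in a space `E`, up to the shape of the edges: the ends of an edge
`uv` are joined by a path inside `S u v`, and edges without a common end are drawn in disjoint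
sets. Edges sharing an end may meet anywhere, as this does not affect the parity arguments. -/
structure IsDrawing {ι E : Type*} [TopologicalSpace E] (H : SimpleGraph ι) (x : ι → E)
    (S : ι → ι → Set E) : Prop where
  joined : ∀ ⦃u v⦄, H.Adj u v → JoinedIn (S u v) (x u) (x v)
  disjoint : ∀ ⦃a b c d⦄, H.Adj a b → H.Adj c d → a ≠ c → a ≠ d → b ≠ c → b ≠ d →
    Disjoint (S a b) (S c d)

theorem IsDrawing.map {ι E F : Type*} [TopologicalSpace E] [TopologicalSpace F]
    {H : SimpleGraph ι} {x : ι → E} {S : ι → ι → Set E} (hS : IsDrawing H x S) {f : E → F}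
    (hf : Continuous f) (f_inj : Function.Injective f) :
    IsDrawing H (f ∘ x) (fun u v ↦ f '' S u v) where
  joined _ _ h := (hS.joined h).map_continuousOn hf.continuousOn
  disjoint _ _ _ _ h h' hac had hbc hbd :=
    (Set.disjoint_image_iff f_inj).2 (hS.disjoint h h' hac had hbc hbd)

/-- The graph `H` can be drawn in the plane without crossings of independent edges. -/
def Drawable {ι : Type*} (H : SimpleGraph ι) : Prop :=
  ∃ (x : ι → ℝ × ℝ) (S : ι → ι → Set (ℝ × ℝ)), IsDrawing H x S

theorem IsDrawing.exists_curves {ι E : Type*} [TopologicalSpace E] {H : SimpleGraph ι} {x : ι → E}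
    {S : ι → ι → Set E} (hS : IsDrawing H x S) :
    ∃ γ : ι → ι → ℝ → E, ∀ u v, H.Adj u v →
      Continuous (γ u v) ∧ γ u v 0 = x u ∧ γ u v 1 = x v ∧ ∀ t, γ u v t ∈ S u v := by
  have exists_curve : ∀ u v, ∃ γ : ℝ → E, H.Adj u v →
      Continuous γ ∧ γ 0 = x u ∧ γ 1 = x v ∧ ∀ t, γ t ∈ S u v := fun u v ↦ by
    by_cases huv : H.Adj u v
    · obtain ⟨p, hp⟩ := hS.joined huv
      exact ⟨p.extend, fun _ ↦ ⟨p.continuous_extend, by simp, by simp, fun t ↦ hp _⟩⟩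
    · exact ⟨fun _ ↦ x u, fun h ↦ absurd h huv⟩
  choose γ hγ using exists_curve
  exact ⟨γ, hγ⟩

theorem exists_log_sub_log_swap {ι : Type*} (x : ι → ℂ) :
    ∃ m : ι → ι → ℤ, ∀ u v, x u ≠ x v →
      Complex.log (x v - x u) - Complex.log (x u - x v) =
        (2 * m u v + 1) * (Real.pi * Complex.I) := by
  have exists_m : ∀ u v, ∃ m : ℤ, x u ≠ x v →
      Complex.log (x v - x u) - Complex.log (x u - x v) =
        (2 * m + 1) * (Real.pi * Complex.I) := fun u v ↦ by
    by_cases huv : x u = x v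
    · exact ⟨0, fun h ↦ absurd huv h⟩
    · obtain ⟨m, hm⟩ := exists_log_sub_log_neg (sub_ne_zero.2 (Ne.symm huv))
      exact ⟨m, fun _ ↦ by rwa [neg_sub] at hm⟩
  choose m hm using exists_m
  exact ⟨m, hm⟩

theorem exists_logIncrement_curve_sub_eq {ι : Type*} {H : SimpleGraph ι} {x : ι → ℂ}
    {γ : ι → ι → ℝ → ℂ}
    (hγ : ∀ a b, H.Adj a b → Continuous (γ a b) ∧ γ a b 0 = x a ∧ γ a b 1 = x b) :
    ∃ n : ι → ι → ι → ℤ, ∀ u a b, H.Adj a b → (∀ t, γ a b t ≠ x u) →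
      logIncrement (fun t ↦ γ a b t - x u) = Complex.log (x b - x u) - Complex.log (x a - x u) +
        n u a b * (2 * Real.pi * Complex.I) := by
  have exists_n : ∀ u a b, ∃ n : ℤ, H.Adj a b → (∀ t, γ a b t ≠ x u) →
      logIncrement (fun t ↦ γ a b t - x u) = Complex.log (x b - x u) - Complex.log (x a - x u) +
        n * (2 * Real.pi * Complex.I) := fun u a b ↦ by
    by_cases h : H.Adj a b ∧ ∀ t, γ a b t ≠ x u
    · obtain ⟨hc, h0, h1⟩ := hγ a b h.1
      obtain ⟨n, hn⟩ := exists_logIncrement_sub_eq hc h.2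
      exact ⟨n, fun _ _ ↦ by rw [hn, h0, h1]⟩
    · exact ⟨0, fun hab hu ↦ absurd ⟨hab, hu⟩ h⟩
  choose n hn using exists_n
  exact ⟨n, hn⟩

/- Write `l u v = log (x v - x u)`. Then `l u v - l v u = (2 * m u v + 1) * π * I`, and the
logarithm of `γ c d - x a` grows by `l a d - l a c + 2 * n a c d * π * I`. -/
theorem IsDrawing.exists_winding {ι : Type*} {H : SimpleGraph ι} {x : ι → ℂ}
    {S : ι → ι → Set ℂ} (hS : IsDrawing H x S) :
    ∃ (m : ι → ι → ℤ) (n : ι → ι → ι → ℤ), ∀ a b c d, H.Adj a b → H.Adj c d →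
      a ≠ c → a ≠ d → b ≠ c → b ≠ d → m a d + m d a = -1 ∧
        m a d + m d b + m b c + m c a + 2 = n b c d + n c a b - n a c d - n d a b := by
  obtain ⟨γ, hγ⟩ := hS.exists_curves
  obtain ⟨m, hm⟩ := exists_log_sub_log_swap x
  obtain ⟨n, hn⟩ := exists_logIncrement_curve_sub_eq fun a b hab ↦
    ⟨(hγ a b hab).1, (hγ a b hab).2.1, (hγ a b hab).2.2.1⟩
  refine ⟨m, n, fun a b c d hab hcd hac had hbc hbd ↦ ?_⟩
  obtain ⟨hαc, hα0, hα1, hα⟩ := hγ a b hab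
  obtain ⟨hβc, hβ0, hβ1, hβ⟩ := hγ c d hcd
  have hne : ∀ s t, γ a b s ≠ γ c d t := fun s t ↦
    (hS.disjoint hab hcd hac had hbc hbd).ne_of_mem (hα s) (hβ t)
  have square := logIncrement_add_eq_add_of_ne hαc hβc hne
  have xad : x a ≠ x d := hα0 ▸ hβ1 ▸ hne 0 1
  have xdb : x d ≠ x b := hα1 ▸ hβ1 ▸ (hne 1 1).symm
  have xbc : x b ≠ x c := hα1 ▸ hβ0 ▸ hne 1 0
  have xca : x c ≠ x a := hα0 ▸ hβ0 ▸ (hne 0 0).symm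
  have pi_I_ne : (Real.pi * Complex.I : ℂ) ≠ 0 := by simp [Real.pi_ne_zero]
  rw [hα0, hα1, hβ0, hβ1, hn a c d hcd fun t ↦ hα0 ▸ (hne 0 t).symm,
    hn d a b hab fun t ↦ hβ1 ▸ hne t 1, hn c a b hab fun t ↦ hβ0 ▸ hne t 0,
    hn b c d hcd fun t ↦ hα1 ▸ (hne 1 t).symm] at square
  constructor
  · have : ((m a d + m d a : ℤ) : ℂ) = ((-1 : ℤ) : ℂ) := mul_right_cancel₀ pi_I_ne <| by
      push_cast
      linear_combination (-(1 : ℂ) / 2) * (hm a d xad + hm d a xad.symm)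
    exact_mod_cast this
  · have : ((m a d + m d b + m b c + m c a + 2 : ℤ) : ℂ) =
        ((n b c d + n c a b - n a c d - n d a b : ℤ) : ℂ) := mul_right_cancel₀ pi_I_ne <| by
      push_cast
      linear_combination (1 / 2 : ℂ) * (square - hm a d xad - hm d b xdb - hm b c xbc - hm c a xca)
    exact_mod_cast this

theorem Drawable.exists_winding {ι : Type*} {H : SimpleGraph ι} (hH : Drawable H) :
    ∃ (m : ι → ι → ℤ) (n : ι → ι → ι → ℤ), ∀ a b c d, H.Adj a b → H.Adj c d →
      a ≠ c → a ≠ d → b ≠ c → b ≠ d → m a d + m d a = -1 ∧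
        m a d + m d b + m b c + m c a + 2 = n b c d + n c a b - n a c d - n d a b := by
  obtain ⟨x, S, hS⟩ := hH
  exact (hS.map Complex.equivRealProdCLM.symm.continuous
    Complex.equivRealProdCLM.symm.injective).exists_winding

/- In the sum of the winding identities over all pairs of independent edges every value of `n`
occurs twice, up to sign, so the right-hand side is even; the left-hand side is odd. -/
theorem not_drawable_completeGraph_five : ¬ Drawable (⊤ : SimpleGraph (Fin 5)) := by
  intro h
  obtain ⟨m, n, hmn⟩ := h.exists_winding
  have key : ∀ a b c d : Fin 5, [a, b, c, d].Nodup → m a d + m d a = -1 ∧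
      m a d + m d b + m b c + m c a + 2 = n b c d + n c a b - n a c d - n d a b := by
    intro a b c d h
    simp only [List.nodup_cons, List.mem_cons, List.not_mem_nil, or_false, not_or] at h
    exact hmn a b c d h.1.1 h.2.2.1 h.1.2.1 h.1.2.2 h.2.1.1 h.2.1.2
  have anti : ∀ a d : Fin 5, a ≠ d → m a d + m d a = -1 := by
    intro a d had
    obtain ⟨b, c, h⟩ := (by decide : ∀ a d : Fin 5, a ≠ d → ∃ b c, [a, b, c, d].Nodup) a d had
    exact (key a b c d h).1
  have wind := fun a b c d h ↦ (key a b c d h).2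
  have := anti 0 1 (by decide)
  have := anti 0 2 (by decide)
  have := anti 0 3 (by decide)
  have := anti 0 4 (by decide)
  have := anti 1 2 (by decide)
  have := anti 1 3 (by decide)
  have := anti 1 4 (by decide)
  have := anti 2 3 (by decide)
  have := anti 2 4 (by decide)
  have := anti 3 4 (by decide)
  have := wind 0 1 2 3 (by decide)
  have := wind 0 2 1 3 (by decide)
  have := wind 0 3 1 2 (by decide)
  have := wind 0 1 2 4 (by decide)
  have := wind 0 2 1 4 (by decide)
  have := wind 0 4 1 2 (by decide)
  have := wind 0 1 3 4 (by decide)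
  have := wind 0 3 1 4 (by decide)
  have := wind 0 4 1 3 (by decide)
  have := wind 0 2 3 4 (by decide)
  have := wind 0 3 2 4 (by decide)
  have := wind 0 4 2 3 (by decide)
  have := wind 1 2 3 4 (by decide)
  have := wind 1 3 2 4 (by decide)
  have := wind 1 4 2 3 (by decide)
  omega

theorem Drawable.exists_winding_completeBipartiteGraph
    (h : Drawable (completeBipartiteGraph (Fin 3) (Fin 3))) :
    ∃ (m : Fin 3 ⊕ Fin 3 → Fin 3 ⊕ Fin 3 → ℤ)
      (n : Fin 3 ⊕ Fin 3 → Fin 3 ⊕ Fin 3 → Fin 3 ⊕ Fin 3 → ℤ),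
      (∀ u v, u ≠ v → m u v + m v u = -1) ∧ ∀ i j k l, i ≠ k → j ≠ l →
        m (.inl i) (.inr l) + m (.inr l) (.inr j) + m (.inr j) (.inl k) + m (.inl k) (.inl i) + 2 =
          n (.inr j) (.inl k) (.inr l) + n (.inl k) (.inl i) (.inr j) -
            n (.inl i) (.inl k) (.inr l) - n (.inr l) (.inl i) (.inr j) := by
  obtain ⟨m, n, hmn⟩ := h.exists_winding
  have anti : ∀ i j, m (.inl i) (.inr j) + m (.inr j) (.inl i) = -1 := fun i j ↦
    (hmn (.inl i) (.inr (j + 1)) (.inl (i + 1)) (.inr j) (by simp) (by simp) (by simp) (by simp)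
      (by simp) (by simp)).1
  refine ⟨m, n, ?_, fun i j k l hik hjl ↦
    (hmn _ _ _ _ (by simp) (by simp) (by simpa) (by simp) (by simp) (by simpa)).2⟩
  rintro (i | i) (j | j) hij
  · exact (hmn (.inl i) (.inr 0) (.inr 1) (.inl j) (by simp) (by simp) (by simp) hij (by simp)
      (by simp)).1
  · exact anti i j
  · exact (add_comm _ _).trans (anti j i)
  · exact (hmn (.inr i) (.inl 0) (.inl 1) (.inr j) (by simp) (by simp) (by simp) hij (by simp)
      (by simp)).1

theorem not_drawable_completeBipartiteGraph_three_three :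
    ¬ Drawable (completeBipartiteGraph (Fin 3) (Fin 3)) := by
  intro h
  obtain ⟨m, n, anti, wind⟩ := h.exists_winding_completeBipartiteGraph
  have := anti (.inl 0) (.inl 1) (by decide)
  have := anti (.inl 0) (.inl 2) (by decide)
  have := anti (.inl 1) (.inl 2) (by decide)
  have := anti (.inr 0) (.inr 1) (by decide)
  have := anti (.inr 0) (.inr 2) (by decide)
  have := anti (.inr 1) (.inr 2) (by decide)
  have := anti (.inl 0) (.inr 0) (by decide)
  have := anti (.inl 0) (.inr 1) (by decide)
  have := anti (.inl 0) (.inr 2) (by decide)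
  have := anti (.inl 1) (.inr 0) (by decide)
  have := anti (.inl 1) (.inr 1) (by decide)
  have := anti (.inl 1) (.inr 2) (by decide)
  have := anti (.inl 2) (.inr 0) (by decide)
  have := anti (.inl 2) (.inr 1) (by decide)
  have := anti (.inl 2) (.inr 2) (by decide)
  have := wind 0 0 1 1 (by decide) (by decide)
  have := wind 0 0 1 2 (by decide) (by decide)
  have := wind 0 1 1 0 (by decide) (by decide)
  have := wind 0 1 1 2 (by decide) (by decide)
  have := wind 0 2 1 0 (by decide) (by decide)
  have := wind 0 2 1 1 (by decide) (by decide)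
  have := wind 0 0 2 1 (by decide) (by decide)
  have := wind 0 0 2 2 (by decide) (by decide)
  have := wind 0 1 2 0 (by decide) (by decide)
  have := wind 0 1 2 2 (by decide) (by decide)
  have := wind 0 2 2 0 (by decide) (by decide)
  have := wind 0 2 2 1 (by decide) (by decide)
  have := wind 1 0 2 1 (by decide) (by decide)
  have := wind 1 0 2 2 (by decide) (by decide)
  have := wind 1 1 2 0 (by decide) (by decide)
  have := wind 1 1 2 2 (by decide) (by decide)
  have := wind 1 2 2 0 (by decide) (by decide)
  have := wind 1 2 2 1 (by decide) (by decide)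
  omega

section Connectivity

variable {W : Type*} {H : SimpleGraph W}

theorem preconnected_induce_iff_exists_adj {D : Set W} :
    (H.induce D).Preconnected ↔
      ∀ Z ⊆ D, Z.Nonempty → (D \ Z).Nonempty → ∃ u ∈ Z, ∃ v ∈ D \ Z, H.Adj u v := by
  constructor
  · rintro hD Z hZ ⟨u, hu⟩ ⟨v, hvD, hvZ⟩
    obtain ⟨p⟩ := hD ⟨u, hZ hu⟩ ⟨v, hvD⟩
    obtain ⟨d, -, hd, hd'⟩ := p.exists_boundary_dart (Subtype.val ⁻¹' Z) hu hvZ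
    exact ⟨d.fst, hd, d.snd, ⟨d.snd.2, hd'⟩, d.adj⟩
  · intro hD u v
    by_contra huv
    obtain ⟨_, ⟨w, hw, rfl⟩, z, ⟨hzD, hz⟩, hwz⟩ :=
      hD (Subtype.val '' {w | (H.induce D).Reachable u w}) (by simp)
        ⟨u, u, .rfl, rfl⟩ ⟨v, v.2, by simpa using huv⟩
    have hwz' : (H.induce D).Adj w ⟨z, hzD⟩ := hwz
    exact hz ⟨⟨z, hzD⟩, hw.trans hwz'.reachable, rfl⟩

theorem connected_induce_singleton (a : W) : (H.induce {a}).Connected :=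
  ⟨SimpleGraph.Preconnected.of_subsingleton⟩

theorem connected_induce_insert {B : Set W} {p a : W} (hB : (H.induce B).Preconnected)
    (ha : a ∈ B) (hpa : H.Adj p a) : (H.induce (insert p B)).Connected :=
  SimpleGraph.connected_induce_union (connected_induce_singleton p).preconnected hB
    (mem_singleton p) ha hpa

/-- The vertex `v` has a neighbour in the set `A`. -/
def AdjTo (H : SimpleGraph W) (A : Set W) (v : W) : Prop := ∃ a ∈ A, H.Adj v a

/-- Some edge of `H` joins the sets `A` and `B`. -/
def Touches (H : SimpleGraph W) (A B : Set W) : Prop := ∃ u ∈ A, AdjTo H B u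

theorem AdjTo.mono {A B : Set W} {v : W} (h : AdjTo H A v) (hAB : A ⊆ B) : AdjTo H B v :=
  h.imp fun _ ⟨ha, hva⟩ ↦ ⟨hAB ha, hva⟩

theorem Touches.symm {A B : Set W} : Touches H A B → Touches H B A :=
  fun ⟨u, hu, v, hv, huv⟩ ↦ ⟨v, hv, u, hu, huv.symm⟩

theorem Touches.mono {A A' B B' : Set W} (h : Touches H A B) (hA : A ⊆ A') (hB : B ⊆ B') :
    Touches H A' B' :=
  h.imp fun _ ⟨hu, hB'⟩ ↦ ⟨hA hu, hB'.mono hB⟩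

theorem touches_singleton_left {A : Set W} {v : W} : Touches H {v} A ↔ AdjTo H A v := by
  simp [Touches]

theorem touches_singleton_right {A : Set W} {v : W} : Touches H A {v} ↔ AdjTo H A v :=
  ⟨fun h ↦ touches_singleton_left.1 h.symm, fun h ↦ (touches_singleton_left.2 h).symm⟩

/-- `K` is the vertex set of a connected component of the subgraph of `H` induced by `R`. -/
def IsComponent (H : SimpleGraph W) (R K : Set W) : Prop :=
  Maximal (fun K ↦ K ⊆ R ∧ (H.induce K).Connected) K

theorem exists_isComponent_mem {R : Set W} {r : W} (hr : r ∈ R) :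
    ∃ K, IsComponent H R K ∧ r ∈ K := by
  let family : Set (Set W) := {K | K ⊆ R ∧ (H.induce K).Connected ∧ r ∈ K}
  have singleton_mem : {r} ∈ family :=
    ⟨singleton_subset_iff.2 hr, connected_induce_singleton r, mem_singleton r⟩
  have mem_sUnion : r ∈ ⋃₀ family := mem_sUnion_of_mem (mem_singleton r) singleton_mem
  refine ⟨⋃₀ family, ⟨⟨sUnion_subset fun K hK ↦ hK.1, ?_⟩, fun K hK hle ↦ ?_⟩, mem_sUnion⟩
  · exact SimpleGraph.induce_sUnion_connected_of_pairwise_not_disjoint ⟨_, singleton_mem⟩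
      (fun hs ht ↦ ⟨r, hs.2.2, ht.2.2⟩) (fun hs ↦ hs.2.1)
  · exact subset_sUnion_of_mem ⟨hK.1, hK.2, hle mem_sUnion⟩

namespace IsComponent

variable {R K K' : Set W}

theorem subset (hK : IsComponent H R K) : K ⊆ R := hK.prop.1

theorem connected (hK : IsComponent H R K) : (H.induce K).Connected := hK.prop.2

theorem eq_of_mem (hK : IsComponent H R K) (hK' : IsComponent H R K') {w : W} (hw : w ∈ K)
    (hw' : w ∈ K') : K = K' := by
  have hunion : K ∪ K' ⊆ R ∧ (H.induce (K ∪ K')).Connected :=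
    ⟨union_subset hK.subset hK'.subset, SimpleGraph.induce_union_connected
      hK.connected.preconnected hK'.connected.preconnected ⟨w, hw, hw'⟩⟩
  exact (hK.eq_of_subset hunion subset_union_left).trans
    (hK'.eq_of_subset hunion subset_union_right).symm

theorem mem_of_adj (hK : IsComponent H R K) {u v : W} (hu : u ∈ K) (hv : v ∈ R)
    (huv : H.Adj u v) : v ∈ K := by
  refine hK.le_of_ge ⟨insert_subset hv hK.subset, ?_⟩ (subset_insert v K) (mem_insert v K)
  exact connected_induce_insert hK.connected.preconnected hu huv.symm

end IsComponent

theorem adj_or_exists_isComponent_touching {R : Set W} {a b : W} (hab : a ≠ b) (ha : a ∉ R)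
    (hR : (H.induce (insert a (insert b R))).Preconnected) :
    H.Adj a b ∨ ∃ K, IsComponent H R K ∧ AdjTo H K a ∧ AdjTo H K b := by
  let Z : Set W := insert b {x | ∃ K, IsComponent H R K ∧ x ∈ K ∧ AdjTo H K b}
  have hZ : Z ⊆ insert a (insert b R) :=
    insert_subset (by simp) fun x ⟨K, hK, hx, _⟩ ↦ .inr (.inr (hK.subset hx))
  have haZ : a ∉ Z := by
    rintro (h | ⟨K, hK, haK, -⟩)
    exacts [hab h, ha (hK.subset haK)]
  obtain ⟨x, hx, y, ⟨hy, hyZ⟩, hxy⟩ := preconnected_induce_iff_exists_adj.1 hR Z hZ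
    ⟨b, mem_insert b _⟩ ⟨a, mem_insert a _, haZ⟩
  have hyb : y ≠ b := fun h ↦ hyZ (.inl h)
  obtain rfl | ⟨K, hK, hxK, hKb⟩ := hx
  · obtain rfl | hyR := hy.imp_right (·.resolve_left hyb)
    · exact .inl hxy.symm
    · obtain ⟨K, hK, hyK⟩ := exists_isComponent_mem (H := H) hyR
      exact (hyZ (.inr ⟨K, hK, hyK, y, hyK, hxy⟩)).elim
  · obtain rfl | hyR := hy.imp_right (·.resolve_left hyb)
    · exact .inr ⟨K, hK, ⟨x, hxK, hxy.symm⟩, hKb⟩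
    · exact (hyZ (.inr ⟨K, hK, hK.mem_of_adj hxK hyR hxy, hKb⟩)).elim

/- The set `K` is empty when `a` and `b` are adjacent, and a component of `R` otherwise. -/
theorem exists_link {R : Set W} {a b : W} (hab : a ≠ b) (ha : a ∉ R)
    (hR : (H.induce (insert a (insert b R))).Preconnected) :
    ∃ K ⊆ R, (H.induce (insert a K)).Connected ∧ AdjTo H (insert a K) b ∧
      ∀ w ∈ K, IsComponent H R K ∧ AdjTo H K a ∧ AdjTo H K b := by
  obtain h | ⟨K, hK, hKa, hKb⟩ := adj_or_exists_isComponent_touching hab ha hR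
  · refine ⟨∅, empty_subset R, ?_, ⟨a, mem_insert a ∅, h.symm⟩, by simp⟩
    exact insert_empty_eq (β := Set W) a ▸ connected_induce_singleton a
  · obtain ⟨k, hk, hak⟩ := hKa
    exact ⟨K, hK.subset, connected_induce_insert hK.connected.preconnected hk hak,
      hKb.mono (subset_insert a K), fun _ _ ↦ ⟨hK, ⟨k, hk, hak⟩, hKb⟩⟩

end Connectivity

section Minors

variable {ι W E : Type*} [TopologicalSpace E] {H : SimpleGraph W} {M : SimpleGraph ι}

/-- The sets `B i` are the branch sets of a model of `M` as a minor of `H`. -/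
structure IsMinorModel (H : SimpleGraph W) (M : SimpleGraph ι) (B : ι → Set W) : Prop where
  connected : ∀ i, (H.induce (B i)).Connected
  disjoint : Pairwise (Function.onFun Disjoint B)
  touches : ∀ ⦃i j⦄, M.Adj i j → Touches H (B i) (B j)

/-- The union of the edges of a drawing of `H` with both ends in `C`. -/
def edgeRegion (H : SimpleGraph W) (S : W → W → Set E) (C : Set W) : Set E :=
  ⋃ (u ∈ C) (v ∈ C) (_ : H.Adj u v), S u v

theorem IsDrawing.joinedIn_edgeRegion {x : W → E} {S : W → W → Set E} (hS : IsDrawing H x S)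
    {C : Set W} (hC : (H.induce C).Preconnected) {u v : W} (hu : u ∈ C) (hv : v ∈ C)
    (huv : u ≠ v) : JoinedIn (edgeRegion H S C) (x u) (x v) := by
  by_contra hnot
  let Z : Set W := {w ∈ C | w = u ∨ JoinedIn (edgeRegion H S C) (x u) (x w)}
  obtain ⟨w, ⟨hw, huw⟩, z, ⟨hz, hzZ⟩, hwz⟩ := preconnected_induce_iff_exists_adj.1 hC Z
    (sep_subset _ _) ⟨u, hu, .inl rfl⟩ ⟨v, hv, by simp [Z, huv.symm, hnot]⟩
  have joined : JoinedIn (edgeRegion H S C) (x w) (x z) :=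
    (hS.joined hwz).mono fun e he ↦ by
      simp only [edgeRegion, mem_iUnion]
      exact ⟨w, hw, z, hz, hwz, he⟩
  obtain rfl | huw := huw
  exacts [hzZ ⟨hz, .inr joined⟩, hzZ ⟨hz, .inr (huw.trans joined)⟩]

theorem IsDrawing.disjoint_edgeRegion {x : W → E} {S : W → W → Set E} (hS : IsDrawing H x S)
    {C D : Set W} (hCD : Disjoint C D) : Disjoint (edgeRegion H S C) (edgeRegion H S D) := by
  simp only [edgeRegion, disjoint_iUnion_left, disjoint_iUnion_right]
  exact fun c hc d hd hcd a ha b hb hab ↦ hS.disjoint hab hcd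
    (hCD.ne_of_mem ha hc) (hCD.ne_of_mem ha hd) (hCD.ne_of_mem hb hc) (hCD.ne_of_mem hb hd)

theorem IsDrawing.of_isMinorModel {x : W → E} {S : W → W → Set E} (hS : IsDrawing H x S)
    {B : ι → Set W} (hB : IsMinorModel H M B) :
    ∃ r : ι → W, IsDrawing M (x ∘ r) fun i j ↦ edgeRegion H S (B i ∪ B j) := by
  choose r hr using fun i ↦ nonempty_coe_sort.1 (hB.connected i).nonempty
  refine ⟨r, fun i j hij ↦ ?_, fun i j k l _ _ hik hil hjk hjl ↦ ?_⟩
  · obtain ⟨u, hu, v, hv, huv⟩ := hB.touches hij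
    have union_connected := SimpleGraph.connected_induce_union
      (hB.connected i).preconnected (hB.connected j).preconnected hu hv huv
    exact hS.joinedIn_edgeRegion union_connected.preconnected (.inl (hr i)) (.inr (hr j))
      ((hB.disjoint hij.ne).ne_of_mem (hr i) (hr j))
  · refine hS.disjoint_edgeRegion ?_
    simp only [disjoint_union_left, disjoint_union_right]
    exact ⟨⟨hB.disjoint hik, hB.disjoint hjk⟩, hB.disjoint hil, hB.disjoint hjl⟩

theorem Drawable.of_isMinorModel (hH : Drawable H) {B : ι → Set W} (hB : IsMinorModel H M B) :
    Drawable M := by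
  obtain ⟨x, S, hS⟩ := hH
  obtain ⟨r, hr⟩ := hS.of_isMinorModel hB
  exact ⟨_, _, hr⟩

theorem Drawable.not_pairwise_disjoint_and_touches (hH : Drawable H) {B : Fin 5 → Set W}
    (hB : ∀ i, (H.induce (B i)).Connected) :
    ¬ Pairwise fun i j ↦ Disjoint (B i) (B j) ∧ Touches H (B i) (B j) := fun hpair ↦
  not_drawable_completeGraph_five <| hH.of_isMinorModel
    ⟨hB, fun _ _ hij ↦ (hpair hij).1, fun _ _ hij ↦ (hpair hij.ne).2⟩

theorem Drawable.not_forall_adjTo (hH : Drawable H) {B : Fin 3 → Set W} {f : Fin 3 → W}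
    (hB : ∀ i, (H.induce (B i)).Connected) (B_disjoint : Pairwise (Function.onFun Disjoint B))
    (f_inj : Function.Injective f) (hfB : ∀ i j, f j ∉ B i) : ¬ ∀ i j, AdjTo H (B i) (f j) := by
  intro hadj
  refine not_drawable_completeBipartiteGraph_three_three <| hH.of_isMinorModel
    (B := Sum.elim B fun j ↦ {f j}) ⟨?_, ?_, ?_⟩
  · rintro (i | j)
    exacts [hB i, connected_induce_singleton (f j)]
  · rintro (i | i) (j | j) hij
    · exact B_disjoint (by simpa using hij)
    · exact disjoint_singleton_right.2 (hfB i j)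
    · exact disjoint_singleton_left.2 (hfB j i)
    · exact disjoint_singleton.2 (f_inj.ne (by simpa using hij))
  · rintro (i | i) (j | j) hij
    · simp at hij
    · exact touches_singleton_right.2 (hadj i j)
    · exact touches_singleton_left.2 (hadj j i)
    · simp at hij

end Minors

section ThreeNeighbors

variable {W : Type*} {H : SimpleGraph W} {A X : Set W} {v : W} {f : Fin 3 → W}

theorem insert_insert_diff_insert_range (f_inj : Function.Injective f) (hf : ∀ i, f i ∈ X)
    (hfv : ∀ i, f i ≠ v) (i : Fin 3) :
    insert (f i) (insert (f (i + 1)) (X \ insert v (range f))) = X \ {v, f (i + 2)} := by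
  have h3 : f i ≠ f (i + 2) := f_inj.ne (by omega)
  have h4 : f (i + 1) ≠ f (i + 2) := f_inj.ne (by omega)
  have range_eq : range f = {f i, f (i + 1), f (i + 2)} := by
    ext w
    simp only [mem_range, mem_insert_iff, mem_singleton_iff]
    constructor
    · rintro ⟨j, rfl⟩
      obtain rfl | rfl | rfl : j = i ∨ j = i + 1 ∨ j = i + 2 := by omega
      all_goals simp
    · rintro (rfl | rfl | rfl)
      exacts [⟨i, rfl⟩, ⟨i + 1, rfl⟩, ⟨i + 2, rfl⟩]
  ext w
  have := hf i
  have := hf (i + 1)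
  have := hfv i
  have := hfv (i + 1)
  grind

theorem Drawable.not_adjTo_component (hH : Drawable H) (hA : (H.induce A).Connected) {K : Set W}
    (hK : (H.induce K).Connected) (hAK : Disjoint A K) (hvA : v ∉ A) (hvK : v ∉ K)
    (f_inj : Function.Injective f) (hf : ∀ i, f i ∉ A ∪ K) (hfv : ∀ i, H.Adj v (f i))
    (hfA : ∀ i, AdjTo H A (f i)) : ¬ ∀ i, AdjTo H K (f i) := by
  intro hfK
  refine hH.not_forall_adjTo (B := ![{v}, A, K]) (f := f) ?_ ?_ f_inj ?_ ?_
  · simp [Fin.forall_fin_succ, hA, hK]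
  · refine (symm_disjoint.pairwise_on _).2 ?_
    simpa [Fin.forall_fin_succ] using ⟨⟨hvA, hvK⟩, hAK⟩
  · intro i j
    fin_cases i
    exacts [(hfv j).ne', fun h ↦ hf j (.inl h), fun h ↦ hf j (.inr h)]
  · intro i j
    fin_cases i
    exacts [⟨v, rfl, (hfv j).symm⟩, hfA j, hfK j]

theorem Drawable.not_wheel_minor (hH : Drawable H) (hA : (H.induce A).Connected) (hvA : v ∉ A)
    (hvA' : AdjTo H A v) {B : Fin 3 → Set W} (hB : ∀ i, (H.induce (B i)).Connected)
    (v_branch : ∀ i, Disjoint {v} (B i) ∧ Touches H {v} (B i))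
    (A_branch : ∀ i, Disjoint A (B i) ∧ Touches H A (B i))
    (hBB : ∀ i, Disjoint (B i) (B (i + 1))) : ¬ ∀ i, Touches H (B i) (B (i + 1)) := by
  intro hBB'
  have separated_symm : Std.Symm fun C D : Set W ↦ Disjoint C D ∧ Touches H C D :=
    ⟨fun _ _ h ↦ ⟨h.1.symm, h.2.symm⟩⟩
  refine hH.not_pairwise_disjoint_and_touches (B := ![{v}, A, B 0, B 1, B 2]) ?_
    ((separated_symm.pairwise_on _).2 ?_)
  · simp [Fin.forall_fin_succ, hA, hB]
  · intro i j hij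
    fin_cases i <;> fin_cases j <;> try exact absurd hij (by decide)
    exacts [⟨disjoint_singleton_left.2 hvA, touches_singleton_left.2 hvA'⟩, v_branch 0, v_branch 1,
      v_branch 2, A_branch 0, A_branch 1, A_branch 2, ⟨hBB 0, hBB' 0⟩,
      ⟨(hBB 2).symm, (hBB' 2).symm⟩, ⟨hBB 1, hBB' 1⟩]

theorem Drawable.not_three_neighbors (hH : Drawable H) (hA : (H.induce A).Connected)
    (hAX : Disjoint A X) (hv : v ∈ X) (hvA : AdjTo H A v) (f_inj : Function.Injective f)
    (hf : ∀ i, f i ∈ X) (hfv : ∀ i, H.Adj v (f i)) (hfA : ∀ i, AdjTo H A (f i)) :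
    ¬ ∀ i, (H.induce (X \ {v, f i})).Preconnected := by
  intro hpre
  let R : Set W := X \ insert v (range f)
  have hfR : ∀ i, f i ∉ R := fun i h ↦ h.2 (.inr (mem_range_self i))
  have hvR : v ∉ R := fun h ↦ h.2 (mem_insert v _)
  have hAR : Disjoint A R := hAX.mono_right sdiff_subset
  have hvA' : v ∉ A := hAX.notMem_of_mem_right hv
  have hfA' : ∀ i, f i ∉ A := fun i ↦ hAX.notMem_of_mem_right (hf i)
  have link := fun i : Fin 3 ↦ exists_link (H := H) (R := R) (a := f i) (b := f (i + 1))
    (f_inj.ne (by omega)) (hfR i)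
    (insert_insert_diff_insert_range f_inj hf (fun i ↦ (hfv i).ne') i ▸ hpre (i + 2))
  choose K hKR K_conn K_adj hK using link
  have K_disjoint : ∀ i, Disjoint (K i) (K (i + 1)) := fun i ↦ disjoint_left.2 fun w hw hw' ↦ by
    obtain ⟨hKi, adj₀, adj₁⟩ := hK i w hw
    obtain ⟨hKi', -, adj₂⟩ := hK (i + 1) w hw'
    rw [← hKi.eq_of_mem hKi' hw hw'] at adj₂
    refine hH.not_adjTo_component hA hKi.connected (hAR.mono_right hKi.subset) hvA'
      (fun h ↦ hvR (hKi.subset h)) f_inj (fun j h ↦ h.elim (hfA' j) fun h ↦ hfR j (hKi.subset h))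
      hfv hfA fun j ↦ ?_
    obtain rfl | rfl | rfl : j = i ∨ j = i + 1 ∨ j = i + 1 + 1 := by omega
    exacts [adj₀, adj₁, adj₂]
  refine hH.not_wheel_minor hA hvA' hvA (B := fun i ↦ insert (f i) (K i)) K_conn (fun i ↦ ⟨?_, ?_⟩)
    (fun i ↦ ⟨?_, ?_⟩) (fun i ↦ ?_) fun i ↦ ?_
  · simpa [(hfv i).ne] using fun h ↦ hvR (hKR i h)
  · exact ⟨v, rfl, f i, mem_insert _ _, hfv i⟩
  · exact disjoint_insert_right.2 ⟨hfA' i, hAR.mono_right (hKR i)⟩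
  · exact (touches_singleton_right.2 (hfA i)).mono subset_rfl (by simp)
  · simp only [disjoint_insert_left, disjoint_insert_right, mem_insert_iff, not_or]
    exact ⟨⟨f_inj.ne (by omega), fun h ↦ hfR (i + 1) (hKR i h)⟩, fun h ↦ hfR i (hKR (i + 1) h),
      K_disjoint i⟩
  · exact (touches_singleton_right.2 (K_adj i)).mono subset_rfl (by simp)

end ThreeNeighbors

section Coloring

variable {W α : Type*} {H : SimpleGraph W} {A P S : Set W} {X Y Z : Finset W} {L : W → Finset α}
  {c φ ψ : W → α} {p p1 p2 q : W} {m : α}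

/-- The hypotheses of Thomassen's induction on the lists of the vertices in `X`. The connected set
`A` stands for the outer face, so that the outer vertices are those with a neighbour in `A`, and `P`
is the set of precoloured vertices. -/
structure IsThomassenAssignment (H : SimpleGraph W) (A : Set W) (X : Finset W) (P : Set W)
    (L : W → Finset α) : Prop where
  notMem : ∀ v ∈ X, v ∉ A
  adjTo : ∀ p ∈ P, AdjTo H A p
  three_le : ∀ v ∈ X, v ∉ P → 3 ≤ (L v).card
  five_le : ∀ v ∈ X, ¬AdjTo H A v → 5 ≤ (L v).card

/-- The map `φ` is a proper colouring of the vertices in `X` that agrees with the precolouring `c`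
on `P` and takes its colours from the lists `L` elsewhere. -/
structure IsListExtension (H : SimpleGraph W) (X : Finset W) (P : Set W) (L : W → Finset α)
    (c φ : W → α) : Prop where
  eqOn : EqOn φ c P
  mem : ∀ v ∈ X, v ∉ P → φ v ∈ L v
  ne : ∀ u ∈ X, ∀ v ∈ X, H.Adj u v → φ u ≠ φ v

/-- Every injective precolouring of `P` extends to `X`, whatever the outer face and the lists, as
long as the hypotheses of Thomassen's induction hold. -/
def PrecoloringExtends (α : Type*) (H : SimpleGraph W) (X : Finset W) (P : Set W) : Prop :=
  ∀ (A : Set W) (L : W → Finset α) (c : W → α), (H.induce A).Connected →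
    IsThomassenAssignment H A X P L → InjOn c P → ∃ φ, IsListExtension H X P L c φ

section Separation

/-- The set `X` is split into two proper subsets that meet in `S`, with no edge between
`Y \ S` and `Z \ S`. -/
structure IsSeparation (H : SimpleGraph W) (X Y Z : Finset W) (S : Set W) : Prop where
  left_ssubset : Y ⊂ X
  right_ssubset : Z ⊂ X
  mem_or_mem : ∀ v ∈ X, v ∈ Y ∨ v ∈ Z
  mem_and_mem_iff : ∀ v, v ∈ Y ∧ v ∈ Z ↔ v ∈ S
  mem_of_adj : ∀ u ∈ X, ∀ v ∈ X, H.Adj u v → u ∈ Y ∧ v ∈ Y ∨ u ∈ Z ∧ v ∈ Z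

theorem IsSeparation.symm (h : IsSeparation H X Y Z S) : IsSeparation H X Z Y S where
  left_ssubset := h.right_ssubset
  right_ssubset := h.left_ssubset
  mem_or_mem v hv := (h.mem_or_mem v hv).symm
  mem_and_mem_iff v := and_comm.trans (h.mem_and_mem_iff v)
  mem_of_adj u hu v hv huv := (h.mem_of_adj u hu v hv huv).symm

theorem exists_isSeparation (hS : S ⊆ X) (h : ¬(H.induce ((X : Set W) \ S)).Preconnected) :
    ∃ Y Z, IsSeparation H X Y Z S := by
  classical
  rw [preconnected_induce_iff_exists_adj] at h
  push Not at h
  obtain ⟨K, hK, ⟨k, hk⟩, ⟨t, ⟨htX, htS⟩, htK⟩, hadj⟩ := h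
  have mem_of_adj {u v : W} (hv : v ∈ X) (hu : u ∈ K) (huv : H.Adj u v) : v ∈ K ∨ v ∈ S := by
    by_contra! hvK
    exact hadj u hu v ⟨⟨hv, hvK.2⟩, hvK.1⟩ huv
  refine ⟨{v ∈ X | v ∈ K ∨ v ∈ S}, {v ∈ X | v ∉ K},
    Finset.filter_ssubset.2 ⟨t, htX, by simp [htK, htS]⟩,
    Finset.filter_ssubset.2 ⟨k, (hK hk).1, by simpa using hk⟩, fun v hv ↦ ?_, fun v ↦ ?_,
    fun u hu v hv huv ↦ ?_⟩
  · simp only [Finset.mem_filter]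
    tauto
  · have hvK : v ∈ K → v ∈ X ∧ v ∉ S := @hK v
    have hvS : v ∈ S → v ∈ X := @hS v
    simp only [Finset.mem_filter]
    tauto
  · have := mem_of_adj hv (u := u)
    have := mem_of_adj hu (u := v)
    have := huv.symm
    simp only [Finset.mem_filter]
    tauto

theorem IsListExtension.glue [DecidableEq W] (hXYZ : IsSeparation H X Y Z S) (hPY : P ⊆ Y)
    (hφ : IsListExtension H Y P L c φ) (hψ : IsListExtension H Z S L φ ψ) :
    IsListExtension H X P L c (Y.piecewise φ ψ) := by
  have eq_left {v : W} (hv : v ∈ Y) : Y.piecewise φ ψ v = φ v := Y.piecewise_eq_of_mem φ ψ hv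
  have eq_right {v : W} (hv : v ∈ Z) : Y.piecewise φ ψ v = ψ v := by
    by_cases hvY : v ∈ Y
    · rw [eq_left hvY, hψ.eqOn ((hXYZ.mem_and_mem_iff v).1 ⟨hvY, hv⟩)]
    · exact Y.piecewise_eq_of_notMem φ ψ hvY
  refine ⟨fun v hv ↦ (eq_left (hPY hv)).trans (hφ.eqOn hv), fun v hv hvP ↦ ?_,
    fun u hu v hv huv ↦ ?_⟩
  · by_cases hvY : v ∈ Y
    · rw [eq_left hvY]
      exact hφ.mem v hvY hvP
    · have hvZ := (hXYZ.mem_or_mem v hv).resolve_left hvY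
      rw [eq_right hvZ]
      exact hψ.mem v hvZ fun hvS ↦ hvY ((hXYZ.mem_and_mem_iff v).2 hvS).1
  · obtain ⟨huY, hvY⟩ | ⟨huZ, hvZ⟩ := hXYZ.mem_of_adj u hu v hv huv
    · rw [eq_left huY, eq_left hvY]
      exact hφ.ne u huY v hvY huv
    · rw [eq_right huZ, eq_right hvZ]
      exact hψ.ne u huZ v hvZ huv

theorem exists_isListExtension_of_isSeparation (hXYZ : IsSeparation H X Y Z S) (hPY : P ⊆ Y)
    (hS : S.Pairwise H.Adj) (hSA : ∀ s ∈ S, AdjTo H A s) (hY : PrecoloringExtends α H Y P)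
    (hZ : PrecoloringExtends α H Z S) (hA : (H.induce A).Connected)
    (hL : IsThomassenAssignment H A X P L) (hc : InjOn c P) :
    ∃ φ, IsListExtension H X P L c φ := by
  classical
  have hYX := hXYZ.left_ssubset.subset
  have hZX := hXYZ.right_ssubset.subset
  have hSYZ := hXYZ.mem_and_mem_iff
  obtain ⟨φ, hφ⟩ := hY A L c hA ⟨fun v hv ↦ hL.notMem v (hYX hv), hL.adjTo,
    fun v hv ↦ hL.three_le v (hYX hv), fun v hv ↦ hL.five_le v (hYX hv)⟩ hc
  have φ_injOn : InjOn φ S := fun s hs t ht hst ↦ by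
    by_contra hne
    exact hφ.ne s ((hSYZ s).2 hs).1 t ((hSYZ t).2 ht).1 (hS hs ht hne) hst
  obtain ⟨ψ, hψ⟩ := hZ A L φ hA ⟨fun v hv ↦ hL.notMem v (hZX hv), hSA,
    fun v hv hvS ↦ hL.three_le v (hZX hv) fun hvP ↦ hvS ((hSYZ v).1 ⟨hPY hvP, hv⟩),
    fun v hv ↦ hL.five_le v (hZX hv)⟩ φ_injOn
  exact ⟨_, hφ.glue hXYZ hPY hψ⟩

end Separation

section Deletion

variable [DecidableEq α] {M : Finset α}

open Classical in
/-- The lists after the outer vertex `p` has been deleted: the interior neighbours of `p` lose the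
colours in `M`, one of which will be given to `p`. -/
noncomputable def removeColors (H : SimpleGraph W) (A : Set W) (L : W → Finset α) (p : W)
    (M : Finset α) (v : W) : Finset α :=
  if H.Adj v p ∧ ¬AdjTo H A v then L v \ M else L v

theorem removeColors_subset (v : W) : removeColors H A L p M v ⊆ L v := by
  unfold removeColors
  split_ifs
  exacts [Finset.sdiff_subset, Finset.Subset.rfl]

theorem IsThomassenAssignment.removeColors [DecidableEq W] (hL : IsThomassenAssignment H A X P L)
    (hM : M.card ≤ 2) : IsThomassenAssignment H (insert p A) (X.erase p) (P \ {p})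
      (removeColors H A L p M) where
  notMem v hv hvA := by
    obtain ⟨hvp, hvX⟩ := Finset.mem_erase.1 hv
    exact hvA.elim hvp (hL.notMem v hvX)
  adjTo q hq := (hL.adjTo q hq.1).mono (subset_insert p A)
  three_le v hv hvP := by
    obtain ⟨hvp, hvX⟩ := Finset.mem_erase.1 hv
    unfold _root_.removeColors
    split_ifs with h
    · have := hL.five_le v hvX h.2
      have := Finset.le_card_sdiff M (L v)
      omega
    · exact hL.three_le v hvX fun hv' ↦ hvP ⟨hv', hvp⟩
  five_le v hv hvA := by
    have hvp : ¬H.Adj v p := fun h ↦ hvA ⟨p, mem_insert p A, h⟩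
    simpa only [_root_.removeColors, hvp, false_and, if_false] using
      hL.five_le v (Finset.mem_of_mem_erase hv) fun h ↦ hvA (h.mono (subset_insert p A))

theorem IsListExtension.update [DecidableEq W]
    (hφ : IsListExtension H (X.erase p) (P \ {p}) (removeColors H A L p M) c φ) (hmM : m ∈ M)
    (hmP : p ∈ P → m = c p) (hmL : p ∉ P → m ∈ L p) (hPA : ∀ q ∈ P, AdjTo H A q)
    (hm : ∀ v ∈ X, H.Adj v p → AdjTo H A v → φ v ≠ m) :
    IsListExtension H X P L c (Function.update φ p m) := by
  have ne_of_adj (v : W) (hv : v ∈ X) (hvp : H.Adj v p) : φ v ≠ m := by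
    by_cases hvA : AdjTo H A v
    · exact hm v hv hvp hvA
    · have hφv := hφ.mem v (Finset.mem_erase.2 ⟨hvp.ne, hv⟩) fun h ↦ hvA (hPA v h.1)
      rw [removeColors, if_pos ⟨hvp, hvA⟩] at hφv
      exact fun h ↦ (Finset.mem_sdiff.1 hφv).2 (h ▸ hmM)
  refine ⟨fun v hv ↦ ?_, fun v hv hvP ↦ ?_, fun u hu v hv huv ↦ ?_⟩
  · obtain rfl | hvp := eq_or_ne v p
    · simpa using hmP hv
    · simpa [hvp] using hφ.eqOn ⟨hv, hvp⟩
  · obtain rfl | hvp := eq_or_ne v p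
    · simpa using hmL hvP
    · simpa [hvp] using removeColors_subset v
        (hφ.mem v (Finset.mem_erase.2 ⟨hvp, hv⟩) fun h ↦ hvP h.1)
  · obtain rfl | hup := eq_or_ne u p
    · simpa [huv.ne'] using (ne_of_adj v hv huv.symm).symm
    obtain rfl | hvp := eq_or_ne v p
    · simpa [hup] using ne_of_adj u hu huv
    · simpa [hup, hvp] using
        hφ.ne u (Finset.mem_erase.2 ⟨hup, hu⟩) v (Finset.mem_erase.2 ⟨hvp, hv⟩) huv

theorem PrecoloringExtends.exists_removeColors [DecidableEq W]
    (h : PrecoloringExtends α H (X.erase p) (P \ {p}))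
    (hA : (H.induce (insert p A)).Connected) (hL : IsThomassenAssignment H A X P L)
    (hM : M.card ≤ 2) (hc : InjOn c P) :
    ∃ φ, IsListExtension H (X.erase p) (P \ {p}) (removeColors H A L p M) c φ :=
  h _ _ c hA (hL.removeColors hM) (hc.mono sdiff_subset)

end Deletion

theorem PrecoloringExtends.exists_of_erase [DecidableEq W]
    (h : PrecoloringExtends α H (X.erase p) (P \ {p}))
    (hA : (H.induce (insert p A)).Connected) (hL : IsThomassenAssignment H A X P L)
    (hc : InjOn c P) (hmP : p ∈ P → m = c p) (hmL : p ∉ P → m ∈ L p)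
    (hp : ∀ v ∈ X, H.Adj v p → AdjTo H A v → v ∈ P ∧ c v ≠ m) :
    ∃ φ, IsListExtension H X P L c φ := by
  classical
  obtain ⟨φ, hφ⟩ := h.exists_removeColors hA hL (M := {m}) (by simp) hc
  refine ⟨_, hφ.update (Finset.mem_singleton_self m) hmP hmL hL.adjTo fun v hv hvp hvA ↦ ?_⟩
  obtain ⟨hvP, hvm⟩ := hp v hv hvp hvA
  rwa [hφ.eqOn ⟨hvP, hvp.ne⟩]

theorem PrecoloringExtends.exists_of_insert
    (h : PrecoloringExtends α H X (insert q P)) (hqP : q ∉ P) (hqA : AdjTo H A q)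
    (hA : (H.induce A).Connected) (hL : IsThomassenAssignment H A X P L) (hc : InjOn c P)
    (hm : m ∈ L q) (hmP : m ∉ c '' P) : ∃ φ, IsListExtension H X P L c φ := by
  classical
  have update_eqOn : EqOn (Function.update c q m) c P := fun v hv ↦
    Function.update_of_ne (ne_of_mem_of_not_mem hv hqP) m c
  have update_injOn : InjOn (Function.update c q m) (insert q P) := by
    rw [injOn_insert hqP, update_eqOn.image_eq, Function.update_self]
    exact ⟨hc.congr update_eqOn.symm, hmP⟩
  obtain ⟨φ, hφ⟩ := h A L _ hA ⟨hL.notMem, forall_mem_insert.2 ⟨hqA, hL.adjTo⟩,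
    fun v hv hvP ↦ hL.three_le v hv fun h ↦ hvP (.inr h), hL.five_le⟩ update_injOn
  refine ⟨φ, fun v hv ↦ (hφ.eqOn (.inr hv)).trans (update_eqOn hv), fun v hv hvP ↦ ?_, hφ.ne⟩
  obtain rfl | hvq := eq_or_ne v q
  · rwa [hφ.eqOn (mem_insert v P), Function.update_self]
  · exact hφ.mem v hv fun h ↦ h.elim hvq hvP

section Induction

theorem precoloringExtends_empty
    (hX : ∀ p ∈ X, PrecoloringExtends α H X {p})
    (ih : ∀ Y ⊂ X, PrecoloringExtends α H Y ∅) : PrecoloringExtends α H X ∅ := by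
  classical
  intro A L c hA hL hc
  have exists_mem (v : W) (hv : v ∈ X) : ∃ m, m ∈ L v :=
    Finset.card_pos.1 (by have := hL.three_le v hv (notMem_empty v); omega)
  by_cases houter : ∃ q ∈ X, AdjTo H A q
  · obtain ⟨q, hq, hqA⟩ := houter
    obtain ⟨m, hm⟩ := exists_mem q hq
    have hXq : PrecoloringExtends α H X (insert q ∅) := by simpa using hX q hq
    exact hXq.exists_of_insert (notMem_empty q) hqA hA hL hc hm (by simp)
  · push Not at houter
    obtain rfl | ⟨p, hp⟩ := X.eq_empty_or_nonempty
    · exact ⟨c, by simp [EqOn], by simp, by simp⟩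
    obtain ⟨m, hm⟩ := exists_mem p hp
    have hL' : IsThomassenAssignment H ∅ X ∅ L :=
      ⟨fun v _ ↦ notMem_empty v, by simp, hL.three_le, fun v hv _ ↦ hL.five_le v hv (houter v hv)⟩
    have hXp : PrecoloringExtends α H (X.erase p) (∅ \ {p}) := by
      simpa using ih _ (Finset.erase_ssubset hp)
    exact hXp.exists_of_erase (insert_empty_eq (β := Set W) p ▸ connected_induce_singleton p)
      hL' hc (by simp) (fun _ ↦ hm) fun v _ _ ⟨_, ha, _⟩ ↦ ha.elim

theorem precoloringExtends_singleton (hp : p ∈ X)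
    (hX : ∀ q ∈ X, H.Adj q p → PrecoloringExtends α H X {q, p})
    (ih : ∀ Y ⊂ X, PrecoloringExtends α H Y ∅) : PrecoloringExtends α H X {p} := by
  classical
  intro A L c hA hL hc
  by_cases houter : ∃ q ∈ X, H.Adj q p ∧ AdjTo H A q
  · obtain ⟨q, hq, hqp, hqA⟩ := houter
    obtain ⟨m, hm, hmc⟩ : ∃ m ∈ L q, m ≠ c p :=
      Finset.exists_mem_ne (by have := hL.three_le q hq hqp.ne; omega) (c p)
    exact (hX q hq hqp).exists_of_insert hqp.ne hqA hA hL hc hm (by simpa using hmc)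
  · push Not at houter
    obtain ⟨a, ha, hpa⟩ := hL.adjTo p rfl
    have hXp : PrecoloringExtends α H (X.erase p) ({p} \ {p}) := by
      simpa using ih _ (Finset.erase_ssubset hp)
    exact hXp.exists_of_erase (connected_induce_insert hA.preconnected ha hpa) hL hc
      (fun _ ↦ rfl) (by simp) fun v hv hvp hvA ↦ (houter v hv hvp hvA).elim

theorem exists_isListExtension_or_preconnected {x y : W}
    (ih : ∀ Y ⊂ X, ∀ u ∈ Y, ∀ v ∈ Y, H.Adj u v → PrecoloringExtends α H Y {u, v})
    (hp1 : p1 ∈ X) (hp2 : p2 ∈ X) (h12 : H.Adj p1 p2) (hx : x ∈ X) (hy : y ∈ X) (hxy : H.Adj x y)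
    (hxA : AdjTo H A x) (hyA : AdjTo H A y) (hA : (H.induce A).Connected)
    (hL : IsThomassenAssignment H A X {p1, p2} L) (hc : InjOn c {p1, p2}) :
    (∃ φ, IsListExtension H X {p1, p2} L c φ) ∨
      (H.induce ((X : Set W) \ {x, y})).Preconnected := by
  by_contra! h
  obtain ⟨hφ, hxyX⟩ := h
  obtain ⟨Y, Z, hYZ⟩ := exists_isSeparation (pair_subset hx hy) hxyX
  have exists_of_left {Y Z : Finset W} (hYZ : IsSeparation H X Y Z {x, y}) (h1 : p1 ∈ Y)
      (h2 : p2 ∈ Y) : ∃ φ, IsListExtension H X {p1, p2} L c φ :=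
    exists_isListExtension_of_isSeparation hYZ (pair_subset h1 h2)
      (pairwise_pair.2 fun _ ↦ ⟨hxy, hxy.symm⟩) (by simp [hxA, hyA])
      (ih Y hYZ.left_ssubset p1 h1 p2 h2 h12)
      (ih Z hYZ.right_ssubset x ((hYZ.mem_and_mem_iff x).2 (by simp)).2 y
        ((hYZ.mem_and_mem_iff y).2 (by simp)).2 hxy) hA hL hc
  obtain ⟨φ, hφ'⟩ := (hYZ.mem_of_adj p1 hp1 p2 hp2 h12).elim
    (fun h ↦ exists_of_left hYZ h.1 h.2) (fun h ↦ exists_of_left hYZ.symm h.1 h.2)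
  exact hφ φ hφ'

theorem Drawable.exists_forall_outer_neighbor_eq {X : Set W} {v : W} (hH : Drawable H)
    (hA : (H.induce A).Connected) (hAX : Disjoint A X) (hv : v ∈ X) (hvA : AdjTo H A v)
    (hX : ∀ u ∈ X, H.Adj v u → AdjTo H A u → (H.induce (X \ {v, u})).Preconnected)
    (hp : p ∈ X) (hvp : H.Adj v p) (hpA : AdjTo H A p) :
    ∃ w, ∀ u ∈ X, H.Adj v u → AdjTo H A u → u = p ∨ u = w := by
  by_contra! h
  obtain ⟨b, hb, hvb, hbA, hbp, -⟩ := h p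
  obtain ⟨d, hd, hvd, hdA, hdp, hdb⟩ := h b
  have hf (i : Fin 3) : ![p, b, d] i ∈ X ∧ H.Adj v (![p, b, d] i) ∧ AdjTo H A (![p, b, d] i) := by
    fin_cases i
    exacts [⟨hp, hvp, hpA⟩, ⟨hb, hvb, hbA⟩, ⟨hd, hvd, hdA⟩]
  have f_inj : Function.Injective ![p, b, d] := by
    intro i j hij
    fin_cases i <;> fin_cases j <;> simp_all
  exact hH.not_three_neighbors hA hAX hv hvA f_inj (fun i ↦ (hf i).1) (fun i ↦ (hf i).2.1)
    (fun i ↦ (hf i).2.2) fun i ↦ hX _ (hf i).1 (hf i).2.1 (hf i).2.2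

theorem exists_isListExtension_of_outer_neighbors [DecidableEq W] {v w : W}
    (ih : PrecoloringExtends α H (X.erase v) {p1, p2}) (hv : v ∈ X) (hv1 : v ≠ p1) (hv2 : v ≠ p2)
    (hvA : AdjTo H A v) (hw : ∀ u ∈ X, H.Adj v u → AdjTo H A u → u = p1 ∨ u = w)
    (hA : (H.induce A).Connected) (hL : IsThomassenAssignment H A X {p1, p2} L)
    (hc : InjOn c {p1, p2}) : ∃ φ, IsListExtension H X {p1, p2} L c φ := by
  classical
  have hvP : v ∉ ({p1, p2} : Set W) := by simp [hv1, hv2]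
  obtain ⟨M, hML, hM⟩ : ∃ M ⊆ (L v).erase (c p1), M.card = 2 := by
    apply Finset.exists_subset_card_eq
    have := hL.three_le v hv hvP
    have := Finset.pred_card_le_card_erase (a := c p1) (s := L v)
    omega
  obtain ⟨a, ha, hva⟩ := hvA
  rw [← sdiff_singleton_eq_self hvP] at ih
  obtain ⟨φ, hφ⟩ := ih.exists_removeColors (connected_induce_insert hA.preconnected ha hva) hL
    hM.le hc
  obtain ⟨m, hm, hmw⟩ : ∃ m ∈ M, m ≠ φ w := Finset.exists_mem_ne (by omega) _
  obtain ⟨hm1, hmL⟩ := Finset.mem_erase.1 (hML hm)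
  refine ⟨_, hφ.update hm (fun h ↦ (hvP h).elim) (fun _ ↦ hmL) hL.adjTo fun u hu huv huA ↦ ?_⟩
  obtain rfl | rfl := hw u hu huv.symm huA
  · rw [hφ.eqOn ⟨mem_insert u _, hv1.symm⟩]
    exact hm1.symm
  · exact hmw.symm

theorem Drawable.precoloringExtends_pair_of_ssubset (hH : Drawable H)
    (ih : ∀ Y ⊂ X, ∀ u ∈ Y, ∀ v ∈ Y, H.Adj u v → PrecoloringExtends α H Y {u, v})
    (ih' : ∀ Y ⊂ X, ∀ u ∈ Y, PrecoloringExtends α H Y {u}) (hp1 : p1 ∈ X) (hp2 : p2 ∈ X)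
    (h12 : H.Adj p1 p2) : PrecoloringExtends α H X {p1, p2} := by
  classical
  intro A L c hA hL hc
  have hp1A : AdjTo H A p1 := hL.adjTo p1 (by simp)
  by_cases houter : ∃ v ∈ X, H.Adj v p1 ∧ AdjTo H A v ∧ v ≠ p2
  · obtain ⟨v, hv, hv1, hvA, hv2⟩ := houter
    by_contra hφ
    obtain ⟨w, hw⟩ := hH.exists_forall_outer_neighbor_eq (X := X) hA
      (disjoint_right.2 hL.notMem) hv hvA
      (fun u hu hvu huA ↦ (exists_isListExtension_or_preconnected ih hp1 hp2 h12 hv hu hvu hvA huA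
        hA hL hc).resolve_left hφ) hp1 hv1 hp1A
    exact hφ (exists_isListExtension_of_outer_neighbors (ih _ (Finset.erase_ssubset hv) p1
      (by simp [hp1, hv1.ne']) p2 (by simp [hp2, hv2.symm]) h12) hv hv1.ne hv2 hvA hw hA hL hc)
  · push Not at houter
    obtain ⟨a, ha, hpa⟩ := hp1A
    have hc12 : c p2 ≠ c p1 := fun h ↦ h12.ne' (hc (by simp) (by simp) h)
    have hX1 : PrecoloringExtends α H (X.erase p1) ({p1, p2} \ {p1}) := by
      rw [pair_sdiff_left h12.ne]
      exact ih' _ (Finset.erase_ssubset hp1) p2 (by simp [hp2, h12.ne'])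
    refine hX1.exists_of_erase (connected_induce_insert hA.preconnected ha hpa) hL hc
      (fun _ ↦ rfl) (by simp) fun v hv hv1 hvA ↦ ?_
    obtain rfl := houter v hv hv1 hvA
    exact ⟨by simp, hc12⟩

theorem Drawable.precoloringExtends_pair (hH : Drawable H) (hp1 : p1 ∈ X) (hp2 : p2 ∈ X)
    (h12 : H.Adj p1 p2) : PrecoloringExtends α H X {p1, p2} := by
  classical
  suffices ∀ X : Finset W, (∀ u ∈ X, ∀ v ∈ X, H.Adj u v → PrecoloringExtends α H X {u, v}) ∧
      (∀ u ∈ X, PrecoloringExtends α H X {u}) ∧ PrecoloringExtends α H X ∅ from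
    (this X).1 p1 hp1 p2 hp2 h12
  intro X
  induction X using Finset.strongInduction with
  | H X ih =>
    have pair (u : W) (hu : u ∈ X) (v : W) (hv : v ∈ X) (huv : H.Adj u v) :
        PrecoloringExtends α H X {u, v} :=
      hH.precoloringExtends_pair_of_ssubset (fun Y hY ↦ (ih Y hY).1) (fun Y hY ↦ (ih Y hY).2.1)
        hu hv huv
    have singleton (u : W) (hu : u ∈ X) : PrecoloringExtends α H X {u} :=
      precoloringExtends_singleton hu (fun v hv hvu ↦ pair v hv u hu hvu)
        fun Y hY ↦ (ih Y hY).2.2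
    exact ⟨pair, singleton, precoloringExtends_empty singleton fun Y hY ↦ (ih Y hY).2.2⟩

end Induction

end Coloring

section Unbounded

variable {E : Type*} [NormedAddCommGroup E] [NormedSpace ℝ E] {K : Set E} {r : ℝ} {p q z : E}

theorem isPreconnected_compl_closedBall (hE : 1 < Module.rank ℝ E) (hr : 0 ≤ r) :
    IsPreconnected (Metric.closedBall (0 : E) r)ᶜ := by
  have eq_image : (Metric.closedBall (0 : E) r)ᶜ =
      (fun x : ℝ × E ↦ x.1 • x.2) '' Ioi r ×ˢ Metric.sphere 0 1 := by
    ext z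
    simp only [mem_compl_iff, mem_closedBall_zero_iff, not_le]
    constructor
    · intro hz
      have z_pos : 0 < ‖z‖ := hr.trans_lt hz
      refine ⟨(‖z‖, ‖z‖⁻¹ • z), ⟨hz, ?_⟩, smul_inv_smul₀ z_pos.ne' z⟩
      rw [mem_sphere_zero_iff_norm, norm_smul, norm_inv, norm_norm, inv_mul_cancel₀ z_pos.ne']
    · rintro ⟨⟨s, w⟩, ⟨hs, hw⟩, rfl⟩
      rw [norm_smul, mem_sphere_zero_iff_norm.1 hw, mul_one]
      exact hs.trans_le (le_abs_self s)
  rw [eq_image]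
  exact (isPreconnected_Ioi.prod (isPreconnected_sphere hE 0 1)).image _
    continuous_smul.continuousOn

theorem compl_closedBall_subset_connectedComponentIn (hE : 1 < Module.rank ℝ E) (hr : 0 ≤ r)
    (hK : K ⊆ Metric.closedBall 0 r) (hp : ¬Bornology.IsBounded (connectedComponentIn Kᶜ p)) :
    (Metric.closedBall 0 r)ᶜ ⊆ connectedComponentIn Kᶜ p := by
  obtain ⟨z, hzp, hz⟩ := not_subset.1 (mt Metric.isBounded_closedBall.subset hp)
  rw [connectedComponentIn_eq hzp]
  exact (isPreconnected_compl_closedBall hE hr).subset_connectedComponentIn hz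
    (compl_subset_compl.2 hK)

theorem isConnected_setOf_not_isBounded_connectedComponentIn (hE : 1 < Module.rank ℝ E)
    (hK : Bornology.IsBounded K) :
    IsConnected {p | p ∉ K ∧ ¬Bornology.IsBounded (connectedComponentIn Kᶜ p)} := by
  have : Nontrivial E := (rank_pos_iff_nontrivial (R := ℝ)).1 (zero_lt_one.trans hE)
  obtain ⟨r, hr, hKr⟩ := hK.subset_closedBall_lt 0 0
  have not_isBounded : ¬Bornology.IsBounded (Metric.closedBall (0 : E) r)ᶜ := fun h ↦
    NormedSpace.unbounded_univ ℝ E (union_compl_self (Metric.closedBall (0 : E) r) ▸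
      Metric.isBounded_closedBall.union h)
  obtain ⟨q, hq⟩ : (Metric.closedBall (0 : E) r)ᶜ.Nonempty :=
    nonempty_iff_ne_empty.2 fun h ↦ not_isBounded (h ▸ Bornology.isBounded_empty)
  have hqK : q ∈ Kᶜ := fun h ↦ hq (hKr h)
  have eq_component : {p | p ∉ K ∧ ¬Bornology.IsBounded (connectedComponentIn Kᶜ p)} =
      connectedComponentIn Kᶜ q := by
    ext p
    constructor
    · rintro ⟨hpK, hp⟩
      rw [← connectedComponentIn_eq
        (compl_closedBall_subset_connectedComponentIn hE hr.le hKr hp hq)]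
      exact mem_connectedComponentIn hpK
    · refine fun hp ↦ ⟨connectedComponentIn_subset _ _ hp, fun h ↦ not_isBounded ?_⟩
      rw [← connectedComponentIn_eq hp] at h
      exact h.subset ((isPreconnected_compl_closedBall hE hr.le).subset_connectedComponentIn hq
        (compl_subset_compl.2 hKr))
  rw [eq_component]
  exact isConnected_connectedComponentIn_iff.2 hqK

theorem exists_mem_segment_joinedIn_insert_connectedComponentIn (hK : IsClosed K) (hz : z ∈ K) :
    ∃ y ∈ K, y ∈ segment ℝ q z ∧ JoinedIn (insert y (connectedComponentIn Kᶜ q)) q y := by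
  let f : ℝ → E := AffineMap.lineMap q z
  have hf : Continuous f := AffineMap.lineMap_continuous
  have f_zero : f 0 = q := AffineMap.lineMap_apply_zero q z
  obtain ⟨s, ⟨hs, hsK⟩, hmin⟩ :=
    (isCompact_Icc.inter_right (hK.preimage hf)).exists_isLeast
      ⟨1, right_mem_Icc.2 zero_le_one, by simpa [f] using hz⟩
  have hsub : f '' Ico 0 s ⊆ connectedComponentIn Kᶜ q := by
    rintro _ ⟨t, ht, rfl⟩
    refine (isPreconnected_Ico.image f hf.continuousOn).subset_connectedComponentIn
      ⟨0, ⟨le_rfl, ht.1.trans_lt ht.2⟩, f_zero⟩ ?_ (mem_image_of_mem f ht)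
    rintro _ ⟨t, ht, rfl⟩ htK
    exact (hmin ⟨⟨ht.1, ht.2.le.trans hs.2⟩, htK⟩).not_gt ht.2
  refine ⟨f s, hsK, segment_eq_image_lineMap ℝ q z ▸ mem_image_of_mem f hs, ?_⟩
  have hjoined : JoinedIn (f '' Icc 0 s) q (f s) :=
    ((convex_Icc 0 s).isPathConnected ⟨0, left_mem_Icc.2 hs.1⟩ |>.image hf).joinedIn _
      ⟨0, left_mem_Icc.2 hs.1, f_zero⟩ _ ⟨s, right_mem_Icc.2 hs.1, rfl⟩
  refine hjoined.mono ?_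
  rw [← Ico_insert_right hs.1, image_insert_eq]
  exact insert_subset_insert hsub

end Unbounded

namespace PlaneGraph

variable {V : Type u} {G : PlaneGraph V} {u v w x y : V}

theorem mem_image_iff {z : ℝ × ℝ} :
    z ∈ G.image ↔ (∃ v ∈ G.verts, G.pos v = z) ∨ ∃ u v, G.Adj u v ∧ z ∈ G.arc s(u, v) := by
  simp [image]

theorem arc_subset_image (h : G.Adj u v) : G.arc s(u, v) ⊆ G.image :=
  fun _ hz ↦ mem_image_iff.2 (.inr ⟨u, v, h, hz⟩)

theorem isCompact_arc (h : G.Adj u v) : IsCompact (G.arc s(u, v)) := by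
  obtain ⟨f, hf, -, hfim, -⟩ := G.arc_arc u v h
  exact hfim ▸ isCompact_Icc.image_of_continuousOn hf

theorem isCompact_image (G : PlaneGraph V) : IsCompact G.image := by
  have finite_adj (u : V) : {v | G.Adj u v}.Finite :=
    G.finite_verts.subset fun v h ↦ G.adj_mem v u (G.adj_symm u v h)
  have eq_biUnion : (⋃ (u) (v) (_ : G.Adj u v), G.arc s(u, v)) =
      ⋃ u ∈ G.verts, ⋃ v ∈ {v | G.Adj u v}, G.arc s(u, v) := by
    ext z
    simp only [mem_iUnion]
    exact ⟨fun ⟨u, v, h, hz⟩ ↦ ⟨u, G.adj_mem u v h, v, h, hz⟩,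
      fun ⟨u, _, v, h, hz⟩ ↦ ⟨u, v, h, hz⟩⟩
  rw [image, eq_biUnion]
  exact (G.finite_verts.image _).isCompact.union
    (G.finite_verts.isCompact_biUnion fun u _ ↦ (finite_adj u).isCompact_biUnion
      fun v h ↦ isCompact_arc h)

theorem connectedComponentIn_subset_outerFace {p : ℝ × ℝ} (hp : p ∈ G.outerFace) :
    connectedComponentIn G.imageᶜ p ⊆ G.outerFace := fun _ hz ↦
  ⟨connectedComponentIn_subset _ _ hz, connectedComponentIn_eq hz ▸ hp.2⟩

theorem isPathConnected_outerFace (G : PlaneGraph V) : IsPathConnected G.outerFace := by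
  have one_lt_rank : 1 < Module.rank ℝ (ℝ × ℝ) := by
    rw [rank_prod', Module.rank_self]
    norm_num
  have isOpen_outerFace : IsOpen G.outerFace := isOpen_iff_forall_mem_open.2 fun p hp ↦
    ⟨connectedComponentIn G.imageᶜ p, connectedComponentIn_subset_outerFace hp,
      G.isCompact_image.isClosed.isOpen_compl.connectedComponentIn, mem_connectedComponentIn hp.1⟩
  exact isOpen_outerFace.isConnected_iff_isPathConnected.1
    (isConnected_setOf_not_isBounded_connectedComponentIn one_lt_rank G.isCompact_image.isBounded)

theorem joinedIn_arc (h : G.Adj u v) : JoinedIn (G.arc s(u, v)) (G.pos u) (G.pos v) := by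
  obtain ⟨f, hf, -, hfim, f_zero, f_one⟩ := G.arc_arc u v h
  rw [← hfim, ← f_zero, ← f_one]
  exact (((convex_Icc (0 : ℝ) 1).isPathConnected (nonempty_Icc.2 zero_le_one)).image' hf).joinedIn
    _ ⟨0, by simp⟩ _ ⟨1, by simp⟩

theorem joinedIn_arc_diff_singleton {z : ℝ × ℝ} (h : G.Adj v w) (hz : z ∈ G.arc s(v, w))
    (hzw : z ≠ G.pos w) : JoinedIn (G.arc s(v, w) \ {G.pos w}) z (G.pos v) := by
  obtain ⟨f, hf, f_inj, hfim, f_zero, f_one⟩ := G.arc_arc v w h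
  obtain ⟨s, hs, rfl⟩ := hfim ▸ hz
  have s_lt_one : s < 1 := hs.2.lt_of_ne fun hs1 ↦ hzw (hs1 ▸ f_one)
  have Icc_subset : Icc 0 s ⊆ Icc 0 1 := Icc_subset_Icc_right hs.2
  have hjoined : JoinedIn (f '' Icc 0 s) (f s) (f 0) :=
    (((convex_Icc 0 s).isPathConnected ⟨0, left_mem_Icc.2 hs.1⟩).image'
      (hf.mono Icc_subset)).joinedIn _ ⟨s, right_mem_Icc.2 hs.1, rfl⟩ _
        ⟨0, left_mem_Icc.2 hs.1, rfl⟩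
  rw [← hfim, ← f_zero, ← f_one]
  refine hjoined.mono ?_
  rintro _ ⟨t, ht, rfl⟩
  refine ⟨⟨t, Icc_subset ht, rfl⟩, fun hft ↦ ?_⟩
  have := f_inj (Icc_subset ht) (right_mem_Icc.2 zero_le_one) hft
  linarith [ht.2]

/-- The part of the drawing of `G` that disappears when the vertex `v` is deleted: the point of `v`
and the edges at `v` without their other ends. -/
def openStar (G : PlaneGraph V) (v : V) : Set (ℝ × ℝ) := G.image \ (G.deleteVerts {v}).image

theorem pos_mem_openStar (hv : v ∈ G.verts) : G.pos v ∈ G.openStar v := by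
  refine ⟨mem_image_iff.2 (.inl ⟨v, hv, rfl⟩), fun h ↦ ?_⟩
  obtain ⟨w, ⟨hw, hwv⟩, hpos⟩ | ⟨a, b, ⟨hab, ha, hb⟩, hpos⟩ := mem_image_iff.1 h
  · exact hwv (G.pos_injOn hw hv hpos)
  · exact (G.arc_avoid a b hab v hv hpos).elim (fun h ↦ ha h.symm) (fun h ↦ hb h.symm)

theorem eq_pos_or_exists_mem_arc_of_mem_openStar {z : ℝ × ℝ} (hz : z ∈ G.openStar v) :
    z = G.pos v ∨ ∃ w, G.Adj v w ∧ z ∈ G.arc s(v, w) ∧ z ≠ G.pos w := by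
  obtain ⟨hzG, hzv⟩ := hz
  rw [mem_image_iff] at hzv
  push Not at hzv
  have ne_pos {w : V} (h : G.Adj v w) : z ≠ G.pos w := fun hzw ↦ hzv.1 w
    ⟨G.adj_mem w v (G.adj_symm v w h), fun hwv ↦ G.adj_irrefl v (hwv ▸ h)⟩ hzw.symm
  obtain ⟨u, hu, rfl⟩ | ⟨a, b, hab, hz⟩ := mem_image_iff.1 hzG
  · by_cases huv : u = v
    · exact .inl (huv ▸ rfl)
    · exact (hzv.1 u ⟨hu, huv⟩ rfl).elim
  · by_cases hav : a = v
    · subst hav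
      exact .inr ⟨b, hab, hz, ne_pos hab⟩
    by_cases hbv : b = v
    · subst hbv
      exact .inr ⟨a, G.adj_symm a b hab, Sym2.eq_swap ▸ hz, ne_pos (G.adj_symm a b hab)⟩
    exact (hzv.2 a b ⟨hab, hav, hbv⟩ hz).elim

theorem disjoint_arc (huv : G.Adj u v) (hxy : G.Adj x y) (hux : u ≠ x) (huy : u ≠ y) (hvx : v ≠ x)
    (hvy : v ≠ y) : Disjoint (G.arc s(u, v)) (G.arc s(x, y)) := by
  have hne : s(u, v) ≠ s(x, y) := by simp [hux, huy]
  have hinter : ({u, v} ∩ {x, y} : Set V) = ∅ := by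
    simp [← disjoint_iff_inter_eq_empty, hux.symm, huy.symm, hvx.symm, hvy.symm]
  simpa [hinter, disjoint_iff_inter_eq_empty] using G.arc_meet u v x y huv hxy hne

theorem arc_diff_singleton_subset_openStar (h : G.Adj v w) :
    G.arc s(v, w) \ {G.pos w} ⊆ G.openStar v := by
  rintro z ⟨hz, hzw⟩
  refine ⟨arc_subset_image h hz, fun hzv ↦ ?_⟩
  obtain ⟨u, ⟨hu, huv⟩, rfl⟩ | ⟨a, b, ⟨hab, hav, hbv⟩, hzab⟩ := mem_image_iff.1 hzv
  · obtain rfl := (G.arc_avoid v w h u hu hz).resolve_left huv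
    exact hzw rfl
  · have hne : s(v, w) ≠ s(a, b) := fun h ↦
      (Sym2.mem_iff.1 (h ▸ Sym2.mem_mk_left v w)).elim (fun h ↦ hav h.symm) (fun h ↦ hbv h.symm)
    obtain ⟨u, ⟨hu, hu'⟩, rfl⟩ := G.arc_meet v w a b h hab hne ⟨hz, hzab⟩
    obtain rfl | rfl := hu
    · exact hu'.elim (fun h ↦ hav h.symm) (fun h ↦ hbv h.symm)
    · exact hzw rfl

theorem joinedIn_openStar {z : ℝ × ℝ} (hz : z ∈ G.openStar v) :
    JoinedIn (G.openStar v) z (G.pos v) := by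
  obtain rfl | ⟨w, h, hzvw, hzw⟩ := eq_pos_or_exists_mem_arc_of_mem_openStar hz
  · exact JoinedIn.refl hz
  · exact (joinedIn_arc_diff_singleton h hzvw hzw).mono (arc_diff_singleton_subset_openStar h)

theorem disjoint_outerFace_union_openStar_arc (h : G.Adj u w) (hvu : v ≠ u) (hvw : v ≠ w) :
    Disjoint (G.outerFace ∪ G.openStar v) (G.arc s(u, w)) := by
  have h' : (G.deleteVerts {v}).Adj u w := ⟨h, hvu.symm, hvw.symm⟩
  rw [disjoint_left]
  rintro z (hz | hz) hzuw
  · exact hz.1 (arc_subset_image h hzuw)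
  · exact hz.2 (arc_subset_image h' hzuw)

/- The segment from a point of the outer face close to `v` to `v` avoids `G - v`, so the first point
of the drawing on it lies in the open star of `v`. -/
theorem joinedIn_outerFace_union_openStar (hv : v ∈ G.verts) (hvG : G.OnOuter v) {p : ℝ × ℝ}
    (hp : p ∈ G.outerFace) : JoinedIn (G.outerFace ∪ G.openStar v) p (G.pos v) := by
  obtain ⟨hvim, hvdel⟩ := pos_mem_openStar hv
  obtain ⟨ε, hε, hball⟩ := Metric.isOpen_iff.1
    (G.deleteVerts {v}).isCompact_image.isClosed.isOpen_compl _ hvdel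
  obtain ⟨q, hq, hqv⟩ := Metric.mem_closure_iff.1 (frontier_subset_closure hvG) ε hε
  obtain ⟨y, hy, hyqv, hqy⟩ := exists_mem_segment_joinedIn_insert_connectedComponentIn
    (q := q) G.isCompact_image.isClosed hvim
  have hyv : y ∈ G.openStar v := ⟨hy, hball ((convex_ball _ ε).segment_subset
    (Metric.mem_ball'.2 hqv) (Metric.mem_ball_self hε) hyqv)⟩
  have hpq : JoinedIn (G.outerFace ∪ G.openStar v) p q :=
    (G.isPathConnected_outerFace.joinedIn p hp q hq).mono subset_union_left
  have hqy' : JoinedIn (G.outerFace ∪ G.openStar v) q y := hqy.mono <|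
    insert_subset (.inr hyv) ((connectedComponentIn_subset_outerFace hq).trans subset_union_left)
  exact (hpq.trans hqy').trans ((joinedIn_openStar hyv).mono subset_union_right)

/-- The graph of `G` with an additional vertex `none`, which stands for the outer face and is joined
to all vertices on its boundary. -/
def apexGraph (G : PlaneGraph V) : SimpleGraph (Option V) where
  Adj
    | none, none => False
    | none, some v | some v, none => v ∈ G.boundaryVerts
    | some u, some v => G.Adj u v
  symm := ⟨by
    rintro (_ | u) (_ | v) h
    exacts [h, h, h, G.adj_symm u v h]⟩
  loopless := ⟨by
    rintro (_ | u) h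
    exacts [h, G.adj_irrefl u h]⟩

/-- The region in which an edge of `G.apexGraph` is drawn. -/
def apexRegion (G : PlaneGraph V) : Option V → Option V → Set (ℝ × ℝ)
  | none, none => ∅
  | none, some v | some v, none => G.outerFace ∪ G.openStar v
  | some u, some v => G.arc s(u, v)

theorem isDrawing_apexGraph {p : ℝ × ℝ} (hp : p ∈ G.outerFace) :
    IsDrawing G.apexGraph (fun x ↦ x.elim p G.pos) G.apexRegion where
  joined := by
    rintro (_ | u) (_ | v) h
    · exact h.elim
    · exact joinedIn_outerFace_union_openStar h.1 h.2 hp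
    · exact (joinedIn_outerFace_union_openStar h.1 h.2 hp).symm
    · exact joinedIn_arc h
  disjoint := by
    rintro (_ | a) (_ | b) (_ | c) (_ | d) hab hcd hac had hbc hbd
    all_goals first | exact hab.elim | exact hcd.elim | skip
    all_goals simp only [ne_eq, not_true_eq_false, Option.some.injEq] at hac had hbc hbd
    · exact disjoint_outerFace_union_openStar_arc hcd hbc hbd
    · exact disjoint_outerFace_union_openStar_arc hcd hac had
    · exact (disjoint_outerFace_union_openStar_arc hab (Ne.symm had) (Ne.symm hbd)).symm
    · exact (disjoint_outerFace_union_openStar_arc hab (Ne.symm hac) (Ne.symm hbc)).symm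
    · exact disjoint_arc hab hcd hac had hbc hbd

theorem drawable_apexGraph (G : PlaneGraph V) : Drawable G.apexGraph :=
  have ⟨_, hp⟩ := G.isPathConnected_outerFace.nonempty
  ⟨_, _, isDrawing_apexGraph hp⟩

end PlaneGraph

theorem exists_mem_exists_mem_ne {α : Type*} {s t : Finset α} (hs : s.Nonempty) (ht : t.Nonempty)
    (hst : s ≠ t) : ∃ a ∈ s, ∃ b ∈ t, a ≠ b := by
  by_contra! h
  obtain ⟨a, ha⟩ := hs
  obtain ⟨b, hb⟩ := ht
  exact hst (Finset.ext fun c ↦ ⟨fun hc ↦ h c hc b hb ▸ hb, fun hc ↦ h a ha c hc ▸ ha⟩)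

namespace PlaneGraph

variable {V : Type u} {G : PlaneGraph V} {C : List V} {p q v : V}

theorem adjTo_apexGraph (hv : v ∈ G.verts) (hvG : G.OnOuter v) :
    AdjTo G.apexGraph {none} (some v) :=
  ⟨none, rfl, hv, hvG⟩

theorem isThomassenAssignment_apexGraph {L : V → Finset ℕ} (hp : p ∈ G.verts)
    (hpG : G.OnOuter p) (hq : q ∈ G.verts) (hqG : G.OnOuter q)
    (h5 : ∀ v ∈ G.verts, ¬G.OnOuter v → 5 ≤ (L v).card)
    (h3 : ∀ v ∈ G.verts, G.OnOuter v → v ≠ p → v ≠ q → 3 ≤ (L v).card) :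
    IsThomassenAssignment G.apexGraph {none} (G.finite_verts.toFinset.map .some)
      {some p, some q} fun x ↦ x.elim ∅ L where
  notMem := by simp
  adjTo := by
    rintro _ (rfl | rfl)
    exacts [adjTo_apexGraph hp hpG, adjTo_apexGraph hq hqG]
  three_le := by
    simp only [Finset.forall_mem_map, Finite.mem_toFinset, mem_insert_iff, mem_singleton_iff,
      Function.Embedding.some_apply, Option.some.injEq, not_or]
    intro v hv hvP
    by_cases hvG : G.OnOuter v
    · exact h3 v hv hvG hvP.1 hvP.2
    · exact le_trans (by norm_num) (h5 v hv hvG)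
  five_le := by
    simp only [Finset.forall_mem_map, Finite.mem_toFinset]
    exact fun v hv hvA ↦ h5 v hv fun hvG ↦ hvA (adjTo_apexGraph hv hvG)

theorem IsOuterCycle.adj_of_isCycleEdge (hC : G.IsOuterCycle C) (h : IsCycleEdge C p q) :
    G.Adj p q := by
  obtain ⟨i, hi⟩ := h
  have hadj := hC.2.2.2.1 i
  obtain ⟨rfl, rfl⟩ | ⟨rfl, rfl⟩ := Sym2.eq_iff.1 hi
  · exact hadj
  · exact G.adj_symm _ _ hadj

theorem IsOuterCycle.onOuter_iff_mem (hC : G.IsOuterCycle C) (hv : v ∈ G.verts) :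
    G.OnOuter v ↔ v ∈ C := by
  obtain ⟨-, -, mem_verts, adj, frontier_eq⟩ := hC
  rw [OnOuter, frontier_eq]
  refine ⟨?_, fun h ↦ .inl ⟨v, h, rfl⟩⟩
  rintro (⟨w, hw, hpos⟩ | hpos)
  · exact G.pos_injOn (mem_verts w hw) hv hpos ▸ hw
  · obtain ⟨i, hi⟩ := mem_iUnion.1 hpos
    obtain rfl | rfl := G.arc_avoid _ _ (adj i) v hv hi
    exacts [C.get_mem i, C.get_mem _]

end PlaneGraph

theorem thomassen_path_of_length_one_general {V : Type u} {G : PlaneGraph V} {p1 p2 : V}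
    {L : V → Finset ℕ} (hP : G.Adj p1 p2) (hp1 : G.OnOuter p1) (hp2 : G.OnOuter p2)
    (h5 : ∀ v ∈ G.verts, ¬G.OnOuter v → 5 ≤ (L v).card)
    (h3 : ∀ v ∈ G.verts, G.OnOuter v → v ≠ p1 → v ≠ p2 → 3 ≤ (L v).card)
    (h1 : (L p1).Nonempty) (h2 : (L p2).Nonempty) (hLne : L p1 ≠ L p2) :
    G.HasLColoring L := by
  classical
  obtain ⟨c1, hc1, c2, hc2, hc⟩ := exists_mem_exists_mem_ne h1 h2 hLne
  have hp1G : p1 ∈ G.verts := G.adj_mem p1 p2 hP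
  have hp2G : p2 ∈ G.verts := G.adj_mem p2 p1 (G.adj_symm p1 p2 hP)
  have some_mem {v : V} (hv : v ∈ G.verts) : some v ∈ G.finite_verts.toFinset.map .some := by
    simpa using hv
  let c : Option V → ℕ := fun x ↦ if x = some p1 then c1 else c2
  have c_p1 : c (some p1) = c1 := if_pos rfl
  have c_p2 : c (some p2) = c2 := if_neg <| by
    rintro ⟨⟩
    exact G.adj_irrefl p1 hP
  have c_inj : InjOn c {some p1, some p2} := by
    rw [injOn_pair, c_p1, c_p2]
    exact fun h ↦ (hc h).elim
  obtain ⟨φ, hφ⟩ := G.drawable_apexGraph.precoloringExtends_pair (some_mem hp1G) (some_mem hp2G) hP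
    {none} _ c (connected_induce_singleton none)
    (PlaneGraph.isThomassenAssignment_apexGraph hp1G hp1 hp2G hp2 h5 h3) c_inj
  refine ⟨fun v ↦ φ (some v), fun v hv ↦ ?_, fun u v huv ↦ hφ.ne _ (some_mem (G.adj_mem u v huv)) _
    (some_mem (G.adj_mem v u (G.adj_symm u v huv))) huv⟩
  by_cases hvP : some v ∈ ({some p1, some p2} : Set (Option V))
  · dsimp only
    rw [hφ.eqOn hvP]
    obtain ⟨⟨⟩⟩ | ⟨⟨⟩⟩ := hvP
    exacts [c_p1 ▸ hc1, c_p2 ▸ hc2]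
  · exact hφ.mem _ (some_mem hv) hvP

/-- Thomassen's theorem, Theorem 1.1:
Let `G` be a plane graph with outer cycle `C`, let `P = p₁p₂` be a path of
length one contained in `C`, and let `L` be a list assignment for `G` with
`|L(v)| ≥ 5` for `v ∈ V(G) − V(C)`, `|L(v)| ≥ 3` for `v ∈ V(C) − V(P)`,
`|L(p₁)| ≥ 1`, `|L(p₂)| ≥ 1` and `L(p₁) ≠ L(p₂)`. Then `G` has an
`L`-coloring. -/
theorem thomassen_path_of_length_one {V : Type u} (G : PlaneGraph V) (C : List V)
    (p1 p2 : V) (L : V → Finset ℕ)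
    (hC : G.IsOuterCycle C)
    (hp1 : p1 ∈ C) (hp2 : p2 ∈ C) (hp12 : p1 ≠ p2)
    (hP : IsCycleEdge C p1 p2)
    (hnonempty : ∀ v ∈ G.verts, (L v).Nonempty)
    (h5 : ∀ v ∈ G.verts, v ∉ C → 5 ≤ (L v).card)
    (h3 : ∀ v ∈ C, v ≠ p1 → v ≠ p2 → 3 ≤ (L v).card)
    (h1 : 1 ≤ (L p1).card) (h2 : 1 ≤ (L p2).card)
    (hLne : L p1 ≠ L p2) :
    G.HasLColoring L := by
  have onOuter_iff {v : V} (hv : v ∈ G.verts) : G.OnOuter v ↔ v ∈ C := hC.onOuter_iff_mem hv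
  have mem_verts : ∀ v ∈ C, v ∈ G.verts := hC.2.2.1
  exact thomassen_path_of_length_one_general (hC.adj_of_isCycleEdge hP)
    ((onOuter_iff (mem_verts p1 hp1)).2 hp1) ((onOuter_iff (mem_verts p2 hp2)).2 hp2)
    (fun v hv hvG ↦ h5 v hv (mt (onOuter_iff hv).2 hvG))
    (fun v hv hvG ↦ h3 v ((onOuter_iff hv).1 hvG)) (Finset.card_pos.1 h1)
    (Finset.card_pos.1 h2) hLne
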